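/- Let n be a positive integer and write 8n+11 = 3^β·n₁ with n₁ a positive integer not divisible by 3. Then t(1,3,3,4;n) = σ(n₁) + a(8n+11). -/

import Mathlib

/-!
Write `φ(q) = ∑ q^{n²}` and `Ψ(q) = ∑ q^{n(n-1)/2}`, both sums over `n ∈ ℤ`. Two power series on the
unit disc are compared: `K(q) = q Ψ(q)² Ψ(q³)²` and the eta quotient
`A(q) = q ∏ (1 - q^{2k})(1 - q^{4k})(1 - q^{6k})(1 - q^{12k})`.

The Jacobi triple product gives `4 A(q) = q φ(-q⁴) φ(-q¹²) Ψ(-q²) Ψ(-q⁶)` (`eta_product`).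
Elementary dissections of `φ` and `Ψ`, which come from splitting `ℤ` and `ℤ²` by parity, then show
that the part of `K + 16 A` with exponents congruent to `3` modulo `8` is
`16 q¹¹ Ψ(q⁸) Ψ(q²⁴)² Ψ(q³²)` (`dissection`). Its coefficient at `q^{8n + 11}` is
`16 t(1,3,3,4;n)` (`GF_tquad`), hence `16 t(1,3,3,4;n)` is the coefficient of `K` at `8n + 11` plus
`16 a(8n + 11)` (`kap_add_eq`).

It remains to compute the coefficients of `K`. The series `Ψ(q) Ψ(q³)` counts the representations
of odd numbers by `x² + 3y²`. The number of these is `2 ∑_{d ∣ n} χ(d)`, where `χ` is the nontrivial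
character modulo `3` (`repSet_ncard_odd`), so `Ψ(q) Ψ(q³)` is a Lambert series. The square of
a Lambert series of this shape is evaluated by partial fractions (`lambert_sq`). The coefficient of
`K` at `M` is found to be `16 ∑ d`, over the divisors `d` of `M` with `3 ∤ d` and `M / d` odd
(`GF_K`). For odd `M = 3^β n₁` with `3 ∤ n₁` this is `16 σ(n₁)` (`kap_eq`).
-/

open scoped BigOperators

/-- `Nquad a b c d n` is the number of quadruples `(x,y,z,w) ∈ ℤ⁴` with
`n = a*x^2 + b*y^2 + c*z^2 + d*w^2`. -/
noncomputable def Nquad (a b c d : ℕ) (n : ℕ) : ℕ :=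
  Nat.card {p : ℤ × ℤ × ℤ × ℤ //
    (n : ℤ) = a * p.1 ^ 2 + b * p.2.1 ^ 2 + c * p.2.2.1 ^ 2 + d * p.2.2.2 ^ 2}

/-- `tquad a b c d n` is the number of quadruples `(x,y,z,w) ∈ ℤ⁴` with
`n = a*x(x-1)/2 + b*y(y-1)/2 + c*z(z-1)/2 + d*w(w-1)/2`. -/
noncomputable def tquad (a b c d : ℕ) (n : ℕ) : ℕ :=
  Nat.card {p : ℤ × ℤ × ℤ × ℤ //
    (n : ℤ) = a * (p.1 * (p.1 - 1) / 2) + b * (p.2.1 * (p.2.1 - 1) / 2)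
      + c * (p.2.2.1 * (p.2.2.1 - 1) / 2) + d * (p.2.2.2 * (p.2.2.2 - 1) / 2)}

/-! ### Power series on the unit disc -/

/-- `f` is given on the open unit disc by the power series with coefficients `c`. -/
def GF (f : ℂ → ℂ) (c : ℕ → ℂ) : Prop :=
  ∀ q : ℂ, ‖q‖ < 1 → HasSum (fun k => c k * q ^ k) (f q)

/-- `f` is given on the open unit disc by a convergent power series. -/
def HasGF (f : ℂ → ℂ) : Prop := ∃ c, GF f c

lemma GF.hasGF {f : ℂ → ℂ} {c : ℕ → ℂ} (h : GF f c) : HasGF f := ⟨c, h⟩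

lemma GF.congr {f g : ℂ → ℂ} {c : ℕ → ℂ} (h : GF f c) (hfg : ∀ q : ℂ, ‖q‖ < 1 → f q = g q) :
    GF g c := fun q hq => hfg q hq ▸ h q hq

lemma GF.add {f g : ℂ → ℂ} {c d : ℕ → ℂ} (hf : GF f c) (hg : GF g d) :
    GF (fun q => f q + g q) (fun k => c k + d k) := fun q hq => by
  simpa only [add_mul] using (hf q hq).add (hg q hq)

lemma GF.const_mul {f : ℂ → ℂ} {c : ℕ → ℂ} (r : ℂ) (hf : GF f c) :
    GF (fun q => r * f q) (fun k => r * c k) := fun q hq => by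
  simpa only [mul_assoc] using (hf q hq).mul_left r

lemma GF.mul {f g : ℂ → ℂ} {c d : ℕ → ℂ} (hf : GF f c) (hg : GF g d) :
    GF (fun q => f q * g q) (fun k => ∑ p ∈ Finset.HasAntidiagonal.antidiagonal k, c p.1 * d p.2) := by
  intro q hq
  have h1 := (hf q hq).summable.norm
  have h2 := (hg q hq).summable.norm
  have h3 := (summable_norm_sum_mul_antidiagonal_of_summable_norm h1 h2).of_norm
  have h4 := tsum_mul_tsum_eq_tsum_sum_antidiagonal_of_summable_norm h1 h2
  rw [(hf q hq).tsum_eq, (hg q hq).tsum_eq] at h4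
  have h5 := h3.hasSum
  rw [← h4] at h5
  refine h5.congr_fun fun k => ?_
  rw [Finset.sum_mul]
  refine Finset.sum_congr rfl fun p hp => ?_
  rw [← Finset.HasAntidiagonal.mem_antidiagonal.1 hp, pow_add]; ring

/-- The factor `q^r` shifts coefficients. -/
lemma GF.shift {f : ℂ → ℂ} {c : ℕ → ℂ} (r : ℕ) (hf : GF f c) :
    GF (fun q => q ^ r * f q) (fun k => if r ≤ k then c (k - r) else 0) := by
  intro q hq
  rw [← (add_left_injective r).hasSum_iff (f := fun k => (if r ≤ k then c (k - r) else 0) * q ^ k)]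
  · refine ((hf q hq).mul_left (q ^ r)).congr_fun fun k => ?_
    simp only [Function.comp_apply, pow_add, le_add_iff_nonneg_left, zero_le, if_true,
      Nat.add_sub_cancel]
    ring
  · intro k hk
    rw [if_neg, zero_mul]
    intro h
    exact hk ⟨k - r, by simp only; omega⟩

lemma GF.comp_pow {f : ℂ → ℂ} {c : ℕ → ℂ} {m : ℕ} (hm : 0 < m) (hf : GF f c) :
    GF (fun q => f (q ^ m)) (fun k => if m ∣ k then c (k / m) else 0) := by
  intro q hq
  have hq' : ‖q ^ m‖ < 1 := by rw [norm_pow]; exact pow_lt_one₀ (norm_nonneg _) hq hm.ne'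
  have hinj : Function.Injective fun j => m * j := fun _ _ h => Nat.eq_of_mul_eq_mul_left hm h
  rw [← hinj.hasSum_iff
    (f := fun k => (if m ∣ k then c (k / m) else 0) * q ^ k)]
  · refine (hf _ hq').congr_fun fun k => ?_
    simp [pow_mul, hm]
  · intro k hk
    rw [if_neg, zero_mul]
    rintro ⟨j, rfl⟩
    exact hk ⟨j, rfl⟩

lemma GF.comp_neg {f : ℂ → ℂ} {c : ℕ → ℂ} (hf : GF f c) :
    GF (fun q => f (-q)) (fun k => (-1) ^ k * c k) := by
  intro q hq
  convert hf (-q) (by rwa [norm_neg]) using 2 with k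
  rw [neg_pow]; ring

lemma HasGF.add {f g : ℂ → ℂ} (hf : HasGF f) (hg : HasGF g) : HasGF fun q => f q + g q := by
  obtain ⟨c, hc⟩ := hf
  obtain ⟨d, hd⟩ := hg
  exact ⟨_, GF.add hc hd⟩

lemma HasGF.mul {f g : ℂ → ℂ} (hf : HasGF f) (hg : HasGF g) : HasGF fun q => f q * g q := by
  obtain ⟨c, hc⟩ := hf
  obtain ⟨d, hd⟩ := hg
  exact ⟨_, GF.mul hc hd⟩

lemma HasGF.const_mul {f : ℂ → ℂ} (r : ℂ) (hf : HasGF f) : HasGF fun q => r * f q := by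
  obtain ⟨c, hc⟩ := hf
  exact ⟨_, GF.const_mul r hc⟩

lemma HasGF.id_mul {f : ℂ → ℂ} (hf : HasGF f) : HasGF fun q => q * f q := by
  obtain ⟨c, hc⟩ := hf
  exact ⟨_, by simpa only [pow_one] using GF.shift 1 hc⟩

lemma HasGF.comp_pow {f : ℂ → ℂ} {m : ℕ} (hm : 0 < m) (hf : HasGF f) :
    HasGF fun q => f (q ^ m) := by
  obtain ⟨c, hc⟩ := hf
  exact ⟨_, GF.comp_pow hm hc⟩

lemma HasGF.comp_neg {f : ℂ → ℂ} (hf : HasGF f) : HasGF fun q => f (-q) := by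
  obtain ⟨c, hc⟩ := hf
  exact ⟨_, GF.comp_neg hc⟩

/-- Collecting equal exponents in a sum of powers of `q`. -/
lemma GF.of_exponents {ι : Type*} (e : ι → ℕ)
    (hs : ∀ q : ℂ, ‖q‖ < 1 → Summable fun i => q ^ e i) :
    GF (fun q => ∑' i, q ^ e i) (fun n => Nat.card {i // e i = n}) := by
  intro q hq
  have h1 : HasSum ((fun i => q ^ e i) ∘ Equiv.sigmaFiberEquiv e) (∑' i, q ^ e i) :=
    (Equiv.hasSum_iff _).2 (hs q hq).hasSum
  refine h1.sigma fun n => ?_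
  have h2 := (h1.summable.sigma_factor n).hasSum
  have h3 : ∀ c : {i // e i = n}, ((fun i => q ^ e i) ∘ Equiv.sigmaFiberEquiv e) ⟨n, c⟩ = q ^ n := by
    rintro ⟨c, rfl⟩; rfl
  rwa [tsum_congr h3, tsum_const, nsmul_eq_mul] at h2

lemma GF.hasFPowerSeriesAt {f : ℂ → ℂ} {c : ℕ → ℂ} (hf : GF f c) :
    HasFPowerSeriesAt f (FormalMultilinearSeries.ofScalars ℂ c) 0 := by
  refine ⟨((1 / 2 : NNReal) : ENNReal), ?_, by simp, ?_⟩
  · have h := (hf (1 / 2) (by norm_num)).summable.norm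
    apply FormalMultilinearSeries.le_radius_of_summable_norm
    refine h.congr fun k => ?_
    rw [FormalMultilinearSeries.ofScalars_norm]
    simp
  · intro y hy
    have hy' : ‖y‖ < 1 := by
      rw [Metric.mem_eball, edist_zero_right, ← ofReal_norm] at hy
      rw [← ENNReal.ofReal_lt_one]
      exact hy.trans (by norm_num)
    have := hf y hy'
    rw [zero_add]
    refine this.congr_fun fun k => ?_
    rw [FormalMultilinearSeries.ofScalars_apply_eq, smul_eq_mul]

/-- The coefficients of a power series are determined by its sum on the disc. -/
lemma GF.unique {f : ℂ → ℂ} {c d : ℕ → ℂ} (hc : GF f c) (hd : GF f d) : c = d :=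
  FormalMultilinearSeries.ofScalars_series_injective ℂ ℂ
    (hc.hasFPowerSeriesAt.eq_formalMultilinearSeries hd.hasFPowerSeriesAt)

/-! ### Theta functions and their dissections -/

/-- Squares of integers, as natural numbers. -/
def sqn (n : ℤ) : ℕ := n.natAbs ^ 2

/-- Triangular numbers `n(n-1)/2` for integral `n`, as natural numbers. -/
def tri (n : ℤ) : ℕ := (n * (n - 1) / 2).toNat

lemma cast_sqn (n : ℤ) : (sqn n : ℤ) = n ^ 2 := by
  simp [sqn]

lemma mul_sub_one_nonneg (n : ℤ) : 0 ≤ n * (n - 1) := by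
  rcases le_or_gt n 0 with h | h
  · exact mul_nonneg_of_nonpos_of_nonpos h (by omega)
  · exact mul_nonneg h.le (by omega)

lemma two_mul_half (n : ℤ) : 2 * (n * (n - 1) / 2) = n * (n - 1) :=
  Int.mul_ediv_cancel' (Int.even_mul_pred_self n).two_dvd

lemma cast_tri (n : ℤ) : (tri n : ℤ) = n * (n - 1) / 2 := by
  have h1 := mul_sub_one_nonneg n
  have h2 := two_mul_half n
  rw [tri, Int.toNat_of_nonneg (by omega)]

lemma two_mul_tri (n : ℤ) : 2 * (tri n : ℤ) = n * (n - 1) := by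
  rw [cast_tri, two_mul_half]

lemma natAbs_le_sqn (n : ℤ) : n.natAbs ≤ sqn n + 1 := by
  unfold sqn; nlinarith

lemma natAbs_le_tri (n : ℤ) : n.natAbs ≤ tri n + 1 := by
  have := two_mul_tri n
  zify
  rcases abs_cases n with ⟨h, h'⟩ | ⟨h, h'⟩ <;> rw [h]
  · have : 0 ≤ (n - 1) * (n - 2) := by
      rcases le_or_gt n 1 with h | h
      · exact mul_nonneg_of_nonpos_of_nonpos (by omega) (by omega)
      · exact mul_nonneg (by omega) (by omega)
    nlinarith
  · nlinarith

lemma summable_norm_pow {q : ℂ} (hq : ‖q‖ < 1) {e : ℤ → ℕ} (he : ∀ n, n.natAbs ≤ e n + 1) :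
    Summable fun n : ℤ => ‖q ^ e n‖ := by
  have hg : Summable fun n : ℤ => ‖q‖ ^ (n.natAbs - 1) := by
    have h1 : Summable fun n : ℕ => ‖q‖ ^ (n - 1) := by
      rw [← summable_nat_add_iff 1]
      simpa using summable_geometric_of_lt_one (norm_nonneg q) hq
    apply Summable.of_nat_of_neg <;> simpa using h1
  refine hg.of_nonneg_of_le (fun _ => norm_nonneg _) fun n => ?_
  rw [norm_pow]
  exact pow_le_pow_of_le_one (norm_nonneg _) hq.le (by have := he n; omega)

/-- The theta function `φ(q) = ∑_{n ∈ ℤ} q^{n²}`. -/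
noncomputable def phi (q : ℂ) : ℂ := ∑' n : ℤ, q ^ sqn n

/-- The theta function `Ψ(q) = ∑_{n ∈ ℤ} q^{n(n-1)/2}`, which is twice Ramanujan's `ψ(q)`. -/
noncomputable def psi (q : ℂ) : ℂ := ∑' n : ℤ, q ^ tri n

lemma norm_pow_lt {q : ℂ} (hq : ‖q‖ < 1) {k : ℕ} (hk : 0 < k) : ‖q ^ k‖ < 1 := by
  rw [norm_pow]; exact pow_lt_one₀ (norm_nonneg _) hq hk.ne'

lemma phi_summable {q : ℂ} (hq : ‖q‖ < 1) : Summable fun n : ℤ => ‖q ^ sqn n‖ :=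
  summable_norm_pow hq natAbs_le_sqn

lemma psi_summable {q : ℂ} (hq : ‖q‖ < 1) : Summable fun n : ℤ => ‖q ^ tri n‖ :=
  summable_norm_pow hq natAbs_le_tri

lemma tsum_split {α β γ : Type*} {f : α → γ} {g : β → γ}
    (hb : Function.Bijective (Sum.elim f g)) {F : γ → ℂ} (hF : Summable F) :
    ∑' c, F c = ∑' a, F (f a) + ∑' b, F (g b) := by
  have h : Summable (F ∘ Equiv.ofBijective _ hb) := (Equiv.summable_iff _).2 hF
  rw [← (Equiv.ofBijective _ hb).tsum_eq F]
  have h1 : Summable ((F ∘ Equiv.ofBijective _ hb) ∘ Sum.inl) := h.comp_injective Sum.inl_injective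
  have h2 : Summable ((F ∘ Equiv.ofBijective _ hb) ∘ Sum.inr) := h.comp_injective Sum.inr_injective
  exact Summable.tsum_sum (f := F ∘ Equiv.ofBijective _ hb) h1 h2

lemma even_odd_bijective :
    Function.Bijective (Sum.elim (fun k : ℤ => 2 * k) (fun k : ℤ => 2 * k + 1)) := by
  constructor
  · rintro (x | x) (y | y) h <;> simp only [Sum.elim_inl, Sum.elim_inr] at h
    · congr 1; omega
    · omega
    · omega
    · congr 1; omega
  · intro x
    rcases Int.even_or_odd' x with ⟨k, h | h⟩
    · exact ⟨Sum.inl k, h.symm⟩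
    · exact ⟨Sum.inr k, h.symm⟩

/-- `ℤ²` is the disjoint union of the pairs of equal parity and the pairs of distinct parity. -/
lemma parity_bijective :
    Function.Bijective (Sum.elim (fun v : ℤ × ℤ => (v.1 + v.2, v.1 - v.2))
      (fun v : ℤ × ℤ => (v.1 + v.2 + 1, v.1 - v.2))) := by
  constructor
  · rintro (⟨x, x'⟩ | ⟨x, x'⟩) (⟨y, y'⟩ | ⟨y, y'⟩) h <;>
      simp only [Sum.elim_inl, Sum.elim_inr, Prod.mk.injEq] at h
    · congr 2 <;> omega
    · omega
    · omega
    · congr 2 <;> omega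
  · rintro ⟨x, y⟩
    rcases Int.even_or_odd' (x + y) with ⟨k, h | h⟩
    · exact ⟨Sum.inl (k, x - k), by ext <;> simp only [Sum.elim_inl] <;> omega⟩
    · exact ⟨Sum.inr (k, x - 1 - k), by ext <;> simp only [Sum.elim_inr] <;> omega⟩

lemma pow_congr (q : ℂ) {a b : ℕ} (h : (2 * a : ℤ) = 2 * b) : q ^ a = q ^ b := by
  congr 1; omega

lemma tsum_mul_tsum_pow {q : ℂ} {e f : ℤ → ℕ}
    (he : Summable fun n => ‖q ^ e n‖) (hf : Summable fun n => ‖q ^ f n‖) :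
    (∑' n, q ^ e n) * (∑' n, q ^ f n) = ∑' v : ℤ × ℤ, q ^ (e v.1 + f v.2) := by
  rw [tsum_mul_tsum_of_summable_norm he hf]
  simp only [pow_add]

lemma summable_prod_pow {q : ℂ} {e f : ℤ → ℕ}
    (he : Summable fun n => ‖q ^ e n‖) (hf : Summable fun n => ‖q ^ f n‖) :
    Summable fun v : ℤ × ℤ => q ^ (e v.1 + f v.2) := by
  have h := summable_mul_of_summable_norm (f := fun n => q ^ e n) (g := fun n => q ^ f n) he hf
  simpa only [pow_add] using h

lemma phi_pow (q : ℂ) (k : ℕ) : phi (q ^ k) = ∑' n : ℤ, q ^ (k * sqn n) := by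
  simp only [phi, pow_mul]

lemma psi_pow (q : ℂ) (k : ℕ) : psi (q ^ k) = ∑' n : ℤ, q ^ (k * tri n) := by
  simp only [psi, pow_mul]

lemma phi_pow_summable {q : ℂ} (hq : ‖q‖ < 1) {k : ℕ} (hk : 0 < k) :
    Summable fun n : ℤ => ‖q ^ (k * sqn n)‖ := by
  simpa only [pow_mul] using phi_summable (norm_pow_lt hq hk)

lemma psi_pow_summable {q : ℂ} (hq : ‖q‖ < 1) {k : ℕ} (hk : 0 < k) :
    Summable fun n : ℤ => ‖q ^ (k * tri n)‖ := by
  simpa only [pow_mul] using psi_summable (norm_pow_lt hq hk)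

lemma phi_dissect {q : ℂ} (hq : ‖q‖ < 1) : phi q = phi (q ^ 4) + q * psi (q ^ 8) := by
  rw [phi_pow, psi_pow, phi, tsum_split even_odd_bijective (phi_summable hq).of_norm,
    ← tsum_mul_left]
  congr 1
  · refine tsum_congr fun n => pow_congr q ?_
    push_cast; rw [cast_sqn, cast_sqn]; ring
  · rw [← (Equiv.subRight (1 : ℤ)).tsum_eq]
    refine tsum_congr fun n => ?_
    rw [← pow_succ']
    apply pow_congr
    have := two_mul_tri n
    simp only [Equiv.subRight_apply]
    push_cast; rw [cast_sqn]; linear_combination (-8) * this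

lemma phi_sq {q : ℂ} (hq : ‖q‖ < 1) : phi q ^ 2 = phi (q ^ 2) ^ 2 + q * psi (q ^ 4) ^ 2 := by
  have h2 := phi_pow_summable hq (k := 2) (by norm_num)
  have h4 := psi_pow_summable hq (k := 4) (by norm_num)
  rw [sq (phi q), sq (phi (q ^ 2)), sq (psi (q ^ 4)), phi_pow, psi_pow, phi, tsum_mul_tsum_pow (phi_summable hq) (phi_summable hq),
    tsum_mul_tsum_pow h2 h2, tsum_mul_tsum_pow h4 h4,
    tsum_split parity_bijective (summable_prod_pow (phi_summable hq) (phi_summable hq)),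
    ← tsum_mul_left]
  congr 1
  · refine tsum_congr fun n => pow_congr q ?_
    push_cast; simp only [cast_sqn]; ring
  · rw [← ((Equiv.subRight (1 : ℤ)).prodCongr (Equiv.subRight (1 : ℤ))).tsum_eq]
    refine tsum_congr fun n => ?_
    rw [← pow_succ']
    apply pow_congr
    have h1 := two_mul_tri n.1
    have h2 := two_mul_tri n.2
    simp only [Equiv.prodCongr_apply, Prod.map, Equiv.subRight_apply]
    push_cast; simp only [cast_sqn]; linear_combination (-4) * h1 + (-4) * h2

lemma psi_sq {q : ℂ} (hq : ‖q‖ < 1) : psi q ^ 2 = 2 * phi q * psi (q ^ 2) := by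
  have h2 := psi_pow_summable hq (k := 2) (by norm_num)
  have e : phi q * psi (q ^ 2) = ∑' v : ℤ × ℤ, q ^ (sqn v.1 + 2 * tri v.2) := by
    rw [psi_pow, phi, tsum_mul_tsum_pow (phi_summable hq) h2]
  rw [mul_assoc, e, sq (psi q), psi, tsum_mul_tsum_pow (psi_summable hq) (psi_summable hq),
    tsum_split parity_bijective (summable_prod_pow (psi_summable hq) (psi_summable hq)), two_mul]
  congr 1
  · rw [← (Equiv.prodComm ℤ ℤ).tsum_eq]
    refine tsum_congr fun n => pow_congr q ?_
    have h1 := two_mul_tri (n.1 + n.2)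
    have h2 := two_mul_tri (n.2 - n.1)
    have h3 := two_mul_tri n.2
    rw [add_comm] at h1
    simp only [Equiv.prodComm_apply, Prod.swap]
    push_cast; simp only [cast_sqn]; linear_combination h1 + h2 - 2 * h3
  · rw [← ((Equiv.refl ℤ).prodCongr (Equiv.subRight (1 : ℤ))).tsum_eq]
    refine tsum_congr fun n => pow_congr q ?_
    have h1 := two_mul_tri (n.1 + (n.2 - 1) + 1)
    have h2 := two_mul_tri (n.1 - (n.2 - 1))
    have h3 := two_mul_tri n.2
    simp only [Equiv.prodCongr_apply, Prod.map, Equiv.subRight_apply, Equiv.refl_apply]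
    push_cast; simp only [cast_sqn]; linear_combination h1 + h2 - 2 * h3

lemma even_sqn (n : ℤ) : Even (sqn n) ↔ Even n := by
  rw [← Int.even_coe_nat, cast_sqn, Int.even_pow' two_ne_zero]

/-- The terms `q^{x²+y²}` with `x + y` odd cancel by the symmetry `x ↔ y`. -/
lemma phi_mul_phi_neg {q : ℂ} (hq : ‖q‖ < 1) : phi q * phi (-q) = phi (-q ^ 2) ^ 2 := by
  have hq' : ‖-q‖ < 1 := by rwa [norm_neg]
  have hq2 : ‖-q ^ 2‖ < 1 := by rw [norm_neg]; exact norm_pow_lt hq two_pos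
  have hs := summable_mul_of_summable_norm (phi_summable hq) (phi_summable hq')
  rw [phi, phi, tsum_mul_tsum_of_summable_norm (phi_summable hq) (phi_summable hq'),
    tsum_split parity_bijective hs]
  have h0 : ∑' v : ℤ × ℤ, q ^ sqn (v.1 + v.2 + 1) * (-q) ^ sqn (v.1 - v.2) = 0 := by
    have h1 : ∑' v : ℤ × ℤ, q ^ sqn (v.1 + v.2 + 1) * (-q) ^ sqn (v.1 - v.2)
        = -∑' v : ℤ × ℤ, q ^ sqn (v.1 + v.2 + 1) * (-q) ^ sqn (v.1 - v.2) := by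
      -- `(u, v) ↦ (u, -1 - v)` exchanges `u + v + 1` and `u - v`
      conv_lhs => rw [← ((Equiv.refl ℤ).prodCongr (Equiv.subLeft (-1 : ℤ))).tsum_eq]
      rw [← tsum_neg]
      refine tsum_congr fun n => ?_
      simp only [Equiv.prodCongr_apply, Prod.map, Equiv.subLeft_apply, Equiv.refl_apply]
      have a1 : n.1 + (-1 - n.2) + 1 = n.1 - n.2 := by ring
      have a2 : n.1 - (-1 - n.2) = n.1 + n.2 + 1 := by ring
      rw [a1, a2, neg_pow q (sqn (n.1 + n.2 + 1)), neg_pow q (sqn (n.1 - n.2))]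
      have key : (-1 : ℂ) ^ sqn (n.1 + n.2 + 1) = -(-1) ^ sqn (n.1 - n.2) := by
        rw [← neg_one_mul ((-1 : ℂ) ^ sqn (n.1 - n.2)), ← pow_succ']
        apply neg_one_pow_congr
        simp only [Nat.even_add_one, even_sqn, Int.even_add, Int.even_sub, Int.not_even_one, iff_false]
      rw [key]; ring
    linear_combination (1 / 2) * h1
  rw [h0, add_zero, sq (phi _), phi, tsum_mul_tsum_of_summable_norm (phi_summable hq2) (phi_summable hq2)]
  refine tsum_congr fun n => ?_
  rw [neg_pow q, neg_pow (q ^ 2), neg_pow (q ^ 2) (sqn n.2)]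
  have h1 : (-1 : ℂ) ^ sqn (n.1 - n.2) = (-1) ^ sqn n.1 * (-1) ^ sqn n.2 := by
    rw [← pow_add]
    apply neg_one_pow_congr
    simp only [Nat.even_add, even_sqn, Int.even_sub]
  have h2 : q ^ sqn (n.1 + n.2) * q ^ sqn (n.1 - n.2)
      = (q ^ 2) ^ sqn n.1 * (q ^ 2) ^ sqn n.2 := by
    rw [← pow_mul, ← pow_mul, ← pow_add, ← pow_add]
    apply pow_congr
    push_cast; simp only [cast_sqn]; ring
  rw [h1]
  linear_combination (-1) ^ sqn n.1 * (-1) ^ sqn n.2 * h2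

/-- The exponents `(u² + 3v² - 1)/2`, where `(u, v)` runs over the pairs of integers of opposite
parity: `(2t - 1, 2w)` in the first summand and `(2s, 2r - 1)` in the second. -/
def oddExp : (ℤ × ℤ) ⊕ (ℤ × ℤ) → ℕ :=
  Sum.elim (fun v => 6 * sqn v.1 + 4 * tri v.2) (fun v => 2 * sqn v.1 + 12 * tri v.2 + 1)

lemma parity_snd_bijective :
    Function.Bijective (Sum.elim (fun v : ℤ × ℤ => (v.2 + v.1, 2 * v.1))
      (fun v : ℤ × ℤ => (v.1 + v.2, 2 * v.2 - 1))) := by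
  constructor
  · rintro (⟨x, x'⟩ | ⟨x, x'⟩) (⟨y, y'⟩ | ⟨y, y'⟩) h <;>
      simp only [Sum.elim_inl, Sum.elim_inr, Prod.mk.injEq] at h
    · congr 2 <;> omega
    · omega
    · omega
    · congr 2 <;> omega
  · rintro ⟨x, y⟩
    rcases Int.even_or_odd' y with ⟨k, h | h⟩
    · exact ⟨Sum.inl (k, x - k), by ext <;> simp only [Sum.elim_inl] <;> omega⟩
    · exact ⟨Sum.inr (x - (k + 1), k + 1), by ext <;> simp only [Sum.elim_inr] <;> omega⟩

lemma psi_mul_psi_three_aux {q : ℂ} (hq : ‖q‖ < 1) :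
    (Summable fun i => q ^ oddExp i) ∧
    ∑' i, q ^ oddExp i = phi (q ^ 6) * psi (q ^ 4) + q * (phi (q ^ 2) * psi (q ^ 12)) := by
  have h6 := phi_pow_summable hq (k := 6) (by norm_num)
  have h4 := psi_pow_summable hq (k := 4) (by norm_num)
  have h2 := phi_pow_summable hq (k := 2) (by norm_num)
  have h12 := psi_pow_summable hq (k := 12) (by norm_num)
  have t1 := summable_prod_pow h6 h4
  have t2 : Summable fun v : ℤ × ℤ => q ^ (2 * sqn v.1 + 12 * tri v.2 + 1) := by
    have := (summable_prod_pow h2 h12).mul_left q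
    refine this.congr fun v => ?_
    rw [pow_succ']
  have e1 : (fun i => q ^ oddExp i) ∘ Sum.inl
      = fun v : ℤ × ℤ => q ^ (6 * sqn v.1 + 4 * tri v.2) := by
    funext v; simp only [Function.comp_apply, oddExp, Sum.elim_inl]
  have e2 : (fun i => q ^ oddExp i) ∘ Sum.inr
      = fun v : ℤ × ℤ => q ^ (2 * sqn v.1 + 12 * tri v.2 + 1) := by
    funext v; simp only [Function.comp_apply, oddExp, Sum.elim_inr]
  have s1 : Summable ((fun i => q ^ oddExp i) ∘ Sum.inl) := by rw [e1]; exact t1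
  have s2 : Summable ((fun i => q ^ oddExp i) ∘ Sum.inr) := by rw [e2]; exact t2
  have s : Summable fun i => q ^ oddExp i := (s1.hasSum.sum s2.hasSum).summable
  refine ⟨s, ?_⟩
  have := Summable.tsum_sum (f := fun i => q ^ oddExp i) s1 s2
  rw [this, phi_pow, psi_pow, tsum_mul_tsum_pow h6 h4, phi_pow, psi_pow,
    tsum_mul_tsum_pow h2 h12, ← tsum_mul_left]
  congr 1
  refine tsum_congr fun v => ?_
  rw [← pow_succ']
  simp only [oddExp, Sum.elim_inr]

/-- Here `x = u + v` and `y = u - v` for `x ≡ y (mod 2)`; the pairs with `x ≢ y` contribute the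
same amount by the symmetry `x ↦ 1 - x` of the triangular numbers. -/
lemma psi_mul_psi_three {q : ℂ} (hq : ‖q‖ < 1) :
    psi q * psi (q ^ 3)
      = 2 * (phi (q ^ 6) * psi (q ^ 4) + q * (phi (q ^ 2) * psi (q ^ 12))) := by
  have h3 := psi_pow_summable hq (k := 3) (by norm_num)
  have hs := summable_prod_pow (psi_summable hq) h3
  have e3 : psi q * psi (q ^ 3) = ∑' v : ℤ × ℤ, q ^ (tri v.1 + 3 * tri v.2) := by
    rw [psi_pow, psi, tsum_mul_tsum_pow (psi_summable hq) h3]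
  obtain ⟨sO, tO⟩ := psi_mul_psi_three_aux hq
  have key : ∀ i, q ^ oddExp i = (fun v : ℤ × ℤ => q ^ (tri (v.1 + v.2) + 3 * tri (v.1 - v.2)))
      (Equiv.ofBijective _ parity_snd_bijective i) := by
    rintro (⟨w, t⟩ | ⟨s, r⟩) <;> apply pow_congr <;>
      simp only [oddExp, Sum.elim_inl, Sum.elim_inr, Equiv.ofBijective_apply]
    · have h1 := two_mul_tri t
      have h2 := two_mul_tri (t + w + 2 * w)
      have h3 := two_mul_tri (t + w - 2 * w)
      push_cast; rw [cast_sqn]; linear_combination 4 * h1 - h2 - 3 * h3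
    · have h1 := two_mul_tri r
      have h2 := two_mul_tri (s + r + (2 * r - 1))
      have h3 := two_mul_tri (s + r - (2 * r - 1))
      push_cast; rw [cast_sqn]; linear_combination 12 * h1 - h2 - 3 * h3
  have key1 : ∑' v : ℤ × ℤ, q ^ (tri (v.1 + v.2) + 3 * tri (v.1 - v.2))
      = phi (q ^ 6) * psi (q ^ 4) + q * (phi (q ^ 2) * psi (q ^ 12)) := by
    rw [← tO, tsum_congr key]
    exact (Equiv.tsum_eq _ _).symm
  have key2 : ∑' v : ℤ × ℤ, q ^ (tri (v.1 + v.2 + 1) + 3 * tri (v.1 - v.2))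
      = ∑' v : ℤ × ℤ, q ^ (tri (v.1 + v.2) + 3 * tri (v.1 - v.2)) := by
    -- `(u, v) ↦ (-v, -u)` sends `u + v + 1` to `1 - (u + v)` and fixes `u - v`
    rw [← ((Equiv.prodComm ℤ ℤ).trans ((Equiv.neg ℤ).prodCongr (Equiv.neg ℤ))).tsum_eq]
    refine tsum_congr fun n => pow_congr q ?_
    simp only [Equiv.trans_apply, Equiv.prodComm_apply, Prod.swap, Equiv.prodCongr_apply, Prod.map,
      Equiv.neg_apply]
    have h1 := two_mul_tri (-n.2 + -n.1 + 1)
    have h2 := two_mul_tri (-n.2 - -n.1)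
    have h3 := two_mul_tri (n.1 + n.2)
    have h4 := two_mul_tri (n.1 - n.2)
    push_cast; linear_combination h1 + 3 * h2 - h3 - 3 * h4
  rw [e3, tsum_split parity_bijective hs, key2, key1]
  ring

/-! ### Representations by `x² + 3y²` -/

/-- The nontrivial character modulo `3`, as a function on `ℕ`. -/
def chi (n : ℕ) : ℤ := if n % 3 = 1 then 1 else if n % 3 = 2 then -1 else 0

lemma chi_mul (a b : ℕ) : chi (a * b) = chi a * chi b := by
  unfold chi
  rw [Nat.mul_mod]
  have h1 : a % 3 < 3 := Nat.mod_lt _ (by norm_num)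
  have h2 : b % 3 < 3 := Nat.mod_lt _ (by norm_num)
  generalize a % 3 = x at *
  generalize b % 3 = y at *
  interval_cases x <;> interval_cases y <;> simp

/-- The divisor sum `∑_{d ∣ n} χ(d)`. -/
def chiSum (n : ℕ) : ℤ := ∑ d ∈ n.divisors, chi d

/-- The Hecke relation for `chiSum`. -/
lemma chiSum_prime_mul {p m : ℕ} (hp : p.Prime) (hm : 0 < m) :
    chiSum (p * m) + chi p * (if p ∣ m then chiSum (m / p) else 0)
      = chiSum m + chi p * chiSum m := by
  have hinj : Function.Injective (fun d : ℕ => p * d) :=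
    fun x y h => Nat.eq_of_mul_eq_mul_left hp.pos h
  have himg : ∀ k : ℕ, ∑ d ∈ k.divisors.image (fun d => p * d), chi d = chi p * chiSum k := by
    intro k
    rw [Finset.sum_image (fun x _ y _ h => hinj h), chiSum, Finset.mul_sum]
    exact Finset.sum_congr rfl fun d _ => chi_mul _ _
  have hU : (p * m).divisors = m.divisors ∪ m.divisors.image (fun d => p * d) := by
    ext d
    simp only [Finset.mem_union, Finset.mem_image, Nat.mem_divisors]
    constructor
    · rintro ⟨h, h0⟩
      by_cases hd : p ∣ d
      · obtain ⟨e, rfl⟩ := hd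
        exact Or.inr ⟨e, ⟨(Nat.mul_dvd_mul_iff_left hp.pos).1 h, hm.ne'⟩, rfl⟩
      · exact Or.inl ⟨((Nat.Prime.coprime_iff_not_dvd hp).2 hd).symm.dvd_of_dvd_mul_left h, hm.ne'⟩
    · rintro (⟨h, -⟩ | ⟨e, ⟨h, -⟩, rfl⟩)
      · exact ⟨h.mul_left p, by have := hp.pos; positivity⟩
      · exact ⟨Nat.mul_dvd_mul_left p h, by have := hp.pos; positivity⟩
  have hI : m.divisors ∩ m.divisors.image (fun d => p * d)
      = if p ∣ m then (m / p).divisors.image (fun d => p * d) else ∅ := by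
    split_ifs with h
    · obtain ⟨k, rfl⟩ := h
      have hk : k ≠ 0 := by rintro rfl; simp at hm
      rw [Nat.mul_div_cancel_left _ hp.pos]
      ext d
      simp only [Finset.mem_inter, Finset.mem_image, Nat.mem_divisors]
      constructor
      · rintro ⟨⟨h1, h0⟩, e, ⟨-, -⟩, rfl⟩
        exact ⟨e, ⟨(Nat.mul_dvd_mul_iff_left hp.pos).1 h1, hk⟩, rfl⟩
      · rintro ⟨e, ⟨h1, -⟩, rfl⟩
        exact ⟨⟨Nat.mul_dvd_mul_left p h1, hm.ne'⟩, e, ⟨h1.mul_left p, hm.ne'⟩, rfl⟩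
    · ext d
      simp only [Finset.mem_inter, Finset.mem_image, Nat.mem_divisors, Finset.notMem_empty,
        iff_false]
      rintro ⟨⟨h1, -⟩, e, -, rfl⟩
      exact h ((Dvd.intro _ rfl).trans h1)
  have := Finset.sum_union_inter (s₁ := m.divisors) (s₂ := m.divisors.image (fun d => p * d))
    (f := chi)
  rw [← hU, hI, himg] at this
  rw [← chiSum, ← chiSum] at this
  rw [← this]
  congr 1
  split_ifs with h
  · rw [himg]
  · simp

/-- The set of representations of `n` by `x² + 3y²`. -/
def repSet (n : ℕ) : Set (ℤ × ℤ) := {v | v.1 ^ 2 + 3 * v.2 ^ 2 = (n : ℤ)}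

lemma repSet_finite (n : ℕ) : (repSet n).Finite := by
  refine (Set.finite_Icc ((-n : ℤ), (-n : ℤ)) ((n : ℤ), (n : ℤ))).subset ?_
  rintro ⟨x, y⟩ h
  simp only [repSet, Set.mem_ofPred_eq] at h
  simp only [Set.mem_Icc, Prod.mk_le_mk]
  refine ⟨⟨?_, ?_⟩, ?_, ?_⟩ <;> nlinarith

/-- An odd prime modulo which `-3` is a nonzero square `r²` is of the form `a² + 3b²`: by the
pigeonhole principle the lattice `x ≡ r y (mod p)` has a nonzero vector `(u, v)` with
`u², v² < p`, so that `u² + 3v²` is `p`, `2p` or `3p`. -/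
lemma exists_rep_of_legendre {p : ℕ} [Fact p.Prime] (hp2 : p ≠ 2)
    (h : legendreSym p (-3) = 1) : ∃ a b : ℤ, a ^ 2 + 3 * b ^ 2 = p := by
  have hp : p.Prime := Fact.out
  have h30 : ((-3 : ℤ) : ZMod p) ≠ 0 := by
    intro h0
    rw [(legendreSym.eq_zero_iff p (-3)).2 h0] at h
    norm_num at h
  obtain ⟨r, hr⟩ := (legendreSym.eq_one_iff p h30).1 h
  set k := Nat.sqrt p with hk
  have hk1 : k * k ≤ p := Nat.sqrt_le p
  have hk2 : p < (k + 1) * (k + 1) := Nat.lt_succ_sqrt p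
  have hkp : k * k ≠ p := by
    intro h
    exact hp.not_isSquare ⟨k, h.symm⟩
  let S : Finset (ℕ × ℕ) := Finset.range (k + 1) ×ˢ Finset.range (k + 1)
  have hcard : (Finset.univ : Finset (ZMod p)).card < S.card := by
    simp [S, ZMod.card, hk2]
  obtain ⟨⟨x, y⟩, hxy, ⟨x', y'⟩, hxy', hne, heq⟩ :=
    Finset.exists_ne_map_eq_of_card_lt_of_maps_to hcard
      (f := fun v : ℕ × ℕ => (v.1 : ZMod p) - r * v.2) (fun _ _ => Finset.mem_univ _)
  simp only [S, Finset.mem_product, Finset.mem_range] at hxy hxy'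
  simp only at heq
  set u : ℤ := (x : ℤ) - x' with hu
  set v : ℤ := (y : ℤ) - y' with hv
  have huv : (u : ZMod p) = r * v := by
    simp only [hu, hv]; push_cast; linear_combination heq
  have hdvd : (p : ℤ) ∣ u ^ 2 + 3 * v ^ 2 := by
    rw [← ZMod.intCast_zmod_eq_zero_iff_dvd _ p]
    push_cast at hr ⊢
    rw [huv]
    linear_combination (-(v : ZMod p) ^ 2) * hr
  have hub : u ^ 2 < p := by
    have h1 : u ^ 2 ≤ (k : ℤ) ^ 2 := by
      apply sq_le_sq'
      · omega
      · omega
    have h2 : ((k * k : ℕ) : ℤ) < p := by exact_mod_cast lt_of_le_of_ne hk1 hkp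
    push_cast at h2; nlinarith
  have hvb : v ^ 2 < p := by
    have h1 : v ^ 2 ≤ (k : ℤ) ^ 2 := by
      apply sq_le_sq'
      · omega
      · omega
    have h2 : ((k * k : ℕ) : ℤ) < p := by exact_mod_cast lt_of_le_of_ne hk1 hkp
    push_cast at h2; nlinarith
  have hpos : 0 < u ^ 2 + 3 * v ^ 2 := by
    by_contra hcon
    have hu0 : u = 0 := by
      have : u ^ 2 = 0 := by nlinarith [sq_nonneg u, sq_nonneg v]
      exact pow_eq_zero_iff (two_ne_zero) |>.1 this
    have hv0 : v = 0 := by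
      have : v ^ 2 = 0 := by nlinarith [sq_nonneg u, sq_nonneg v]
      exact pow_eq_zero_iff (two_ne_zero) |>.1 this
    apply hne
    ext <;> simp only <;> omega
  obtain ⟨c, hc⟩ := hdvd
  have hp0 : (0 : ℤ) < p := by exact_mod_cast hp.pos
  have hc0 : 0 < c := by
    by_contra hcon
    nlinarith
  have hc4 : c < 4 := by
    by_contra hcon
    nlinarith
  interval_cases c
  · exact ⟨u, v, by linarith⟩
  -- `2p ≡ 2 (mod 4)` is not of the form `u² + 3v²`
  · exfalso
    have hodd : p % 2 = 1 := hp.eq_two_or_odd.resolve_left hp2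
    have h4 : (u ^ 2 + 3 * v ^ 2) % 4 = 2 := by rw [hc]; omega
    rcases Int.even_or_odd' u with ⟨s, hs | hs⟩ <;> rcases Int.even_or_odd' v with ⟨t, ht | ht⟩ <;>
      rw [hs, ht] at h4 <;> ring_nf at h4 <;> omega
  -- if `u² + 3v² = 3p` then `u = 3w`, and `v² + 3w² = p`
  · have : (3 : ℤ) ∣ u := by
      have : (3 : ℤ) ∣ u ^ 2 := ⟨p - v ^ 2, by linarith⟩
      exact Int.prime_three.dvd_of_dvd_pow this
    obtain ⟨w, hw⟩ := this
    exact ⟨v, w, by rw [hw] at hc; linarith⟩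

/-- Multiplication by `a + b√-3` on coordinates. -/
def mulMap (a b : ℤ) (v : ℤ × ℤ) : ℤ × ℤ := (a * v.1 - 3 * b * v.2, b * v.1 + a * v.2)

lemma mulMap_injective {a b : ℤ} (h : a ^ 2 + 3 * b ^ 2 ≠ 0) :
    Function.Injective (mulMap a b) := by
  rintro ⟨x, y⟩ ⟨x', y'⟩ he
  simp only [mulMap, Prod.mk.injEq] at he
  obtain ⟨h1, h2⟩ := he
  have e1 : (a ^ 2 + 3 * b ^ 2) * x = (a ^ 2 + 3 * b ^ 2) * x' := by
    linear_combination a * h1 + 3 * b * h2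
  have e2 : (a ^ 2 + 3 * b ^ 2) * y = (a ^ 2 + 3 * b ^ 2) * y' := by
    linear_combination a * h2 - b * h1
  rw [mul_left_cancel₀ h e1, mul_left_cancel₀ h e2]

lemma mulMap_mem {a b : ℤ} {p m : ℕ} (h : a ^ 2 + 3 * b ^ 2 = p) {v : ℤ × ℤ}
    (hv : v ∈ repSet m) : mulMap a b v ∈ repSet (p * m) := by
  simp only [repSet, Set.mem_ofPred_eq, mulMap] at *
  push_cast
  rw [← h, ← hv]; ring

/-- The criterion for divisibility by `a + b√-3` in `ℤ[√-3]`. -/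
lemma mem_image_mulMap {a b : ℤ} {p m : ℕ} (hp : p.Prime) (h : a ^ 2 + 3 * b ^ 2 = p) {v : ℤ × ℤ}
    (hv : v ∈ repSet (p * m)) :
    v ∈ mulMap a b '' repSet m ↔ (p : ℤ) ∣ a * v.2 - b * v.1 := by
  have hp0 : (p : ℤ) ≠ 0 := by exact_mod_cast hp.ne_zero
  constructor
  · rintro ⟨⟨x, y⟩, -, rfl⟩
    refine ⟨y, ?_⟩
    simp only [mulMap]; rw [← h]; ring
  · rintro ⟨t, ht⟩
    obtain ⟨X, Y⟩ := v
    simp only [repSet, Set.mem_ofPred_eq] at hv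
    simp only at ht
    push_cast at hv
    have h1 : (p : ℤ) ∣ (a * X + 3 * b * Y) ^ 2 := by
      refine ⟨p * m - 3 * p * t ^ 2, ?_⟩
      have : (a * X + 3 * b * Y) ^ 2 + 3 * (a * Y - b * X) ^ 2
        = (a ^ 2 + 3 * b ^ 2) * (X ^ 2 + 3 * Y ^ 2) := by ring
      rw [h, hv, ht] at this
      linear_combination this
    obtain ⟨s, hs⟩ := (Nat.prime_iff_prime_int.1 hp).dvd_of_dvd_pow h1
    have e1 : a * s - 3 * b * t = X := by
      apply mul_left_cancel₀ hp0
      linear_combination (-a) * hs + 3 * b * ht + X * h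
    have e2 : b * s + a * t = Y := by
      apply mul_left_cancel₀ hp0
      linear_combination (-b) * hs - a * ht + Y * h
    refine ⟨(s, t), ?_, by simp only [mulMap, e1, e2]⟩
    simp only [repSet, Set.mem_ofPred_eq]
    apply mul_left_cancel₀ hp0
    rw [← hv, ← e1, ← e2, ← h]; ring

/-- If `p = a² + 3b²`, every representation of `pm` is a multiple of `a + b√-3` or of its conjugate,
and it is a multiple of both exactly when it is divisible by `p`. -/
lemma repSet_ncard_split {a b : ℤ} {p m : ℕ} (hp : p.Prime) (hp2 : p ≠ 2) (hp3 : p ≠ 3)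
    (h : a ^ 2 + 3 * b ^ 2 = p) :
    (repSet (p * m)).ncard + (if p ∣ m then (repSet (m / p)).ncard else 0)
      = 2 * (repSet m).ncard := by
  have hpi := Nat.prime_iff_prime_int.1 hp
  have hp0 : (p : ℤ) ≠ 0 := by exact_mod_cast hp.ne_zero
  have h' : a ^ 2 + 3 * (-b) ^ 2 = p := by rw [← h]; ring
  have hi := mulMap_injective (a := a) (b := b) (by rw [h]; exact hp0)
  have hi' := mulMap_injective (a := a) (b := -b) (by rw [h']; exact hp0)
  have h2p : ¬ (p : ℤ) ∣ 2 := by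
    intro hd
    exact hp2 ((Nat.prime_dvd_prime_iff_eq hp Nat.prime_two).1 (by exact_mod_cast hd))
  have h3p : ¬ (p : ℤ) ∣ 3 := by
    intro hd
    exact hp3 ((Nat.prime_dvd_prime_iff_eq hp Nat.prime_three).1 (by exact_mod_cast hd))
  have hnot : ¬ ((p : ℤ) ∣ a ∧ (p : ℤ) ∣ b) := by
    rintro ⟨⟨s, rfl⟩, t, rfl⟩
    apply hpi.not_isUnit
    rw [isUnit_iff_dvd_one]
    refine ⟨s ^ 2 + 3 * t ^ 2, ?_⟩
    apply mul_left_cancel₀ hp0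
    linear_combination -h
  have ha : ¬ (p : ℤ) ∣ a := by
    intro hd
    refine hnot ⟨hd, ?_⟩
    have : (p : ℤ) ∣ 3 * b ^ 2 := by
      have h1 : 3 * b ^ 2 = p - a ^ 2 := by linarith
      rw [h1]; exact dvd_sub dvd_rfl (dvd_pow hd two_ne_zero)
    exact hpi.dvd_of_dvd_pow ((hpi.dvd_or_dvd this).resolve_left h3p)
  have hb : ¬ (p : ℤ) ∣ b := by
    intro hd
    refine ha ?_
    have : (p : ℤ) ∣ a ^ 2 := by
      have h1 : a ^ 2 = p - 3 * b ^ 2 := by linarith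
      rw [h1]; exact dvd_sub dvd_rfl ((dvd_pow hd two_ne_zero).mul_left 3)
    exact hpi.dvd_of_dvd_pow this
  have hU : repSet (p * m) = mulMap a b '' repSet m ∪ mulMap a (-b) '' repSet m := by
    ext v
    constructor
    · intro hv
      rw [Set.mem_union, mem_image_mulMap hp h hv, mem_image_mulMap hp h' hv]
      apply hpi.dvd_or_dvd
      simp only [repSet, Set.mem_ofPred_eq] at hv
      push_cast at hv
      exact ⟨v.2 ^ 2 - b ^ 2 * m, by linear_combination (v.2 ^ 2) * h - b ^ 2 * hv⟩
    · rintro (⟨w, hw, rfl⟩ | ⟨w, hw, rfl⟩)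
      · exact mulMap_mem h hw
      · exact mulMap_mem h' hw
  have hI : mulMap a b '' repSet m ∩ mulMap a (-b) '' repSet m
      = if p ∣ m then (fun v : ℤ × ℤ => ((p : ℤ) * v.1, (p : ℤ) * v.2)) '' repSet (m / p) else ∅ := by
    have key : ∀ v ∈ mulMap a b '' repSet m ∩ mulMap a (-b) '' repSet m,
        ∃ s t : ℤ, v = (p * s, p * t) ∧ p * (s ^ 2 + 3 * t ^ 2) = m := by
      rintro v ⟨hv1, hv2⟩
      have hv : v ∈ repSet (p * m) := by rw [hU]; exact Or.inl hv1
      rw [mem_image_mulMap hp h hv] at hv1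
      rw [mem_image_mulMap hp h' hv] at hv2
      have d1 : (p : ℤ) ∣ 2 * (a * v.2) := by
        have := dvd_add hv1 hv2; ring_nf at this ⊢; exact this
      have d2 : (p : ℤ) ∣ 2 * (b * v.1) := by
        have := dvd_sub hv2 hv1; ring_nf at this ⊢; exact this
      obtain ⟨t, ht⟩ := (hpi.dvd_or_dvd ((hpi.dvd_or_dvd d1).resolve_left h2p)).resolve_left ha
      obtain ⟨s, hs⟩ := (hpi.dvd_or_dvd ((hpi.dvd_or_dvd d2).resolve_left h2p)).resolve_left hb
      refine ⟨s, t, Prod.ext hs ht, ?_⟩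
      simp only [repSet, Set.mem_ofPred_eq] at hv
      push_cast at hv
      rw [hs, ht] at hv
      apply mul_left_cancel₀ hp0
      linear_combination hv
    split_ifs with hd
    · obtain ⟨k, rfl⟩ := hd
      rw [Nat.mul_div_cancel_left _ hp.pos]
      ext v
      constructor
      · intro hv
        obtain ⟨s, t, rfl, hst⟩ := key v hv
        refine ⟨(s, t), ?_, rfl⟩
        simp only [repSet, Set.mem_ofPred_eq]
        push_cast at hst
        exact mul_left_cancel₀ hp0 hst
      · rintro ⟨⟨s, t⟩, hst, rfl⟩
        refine ⟨⟨mulMap a (-b) (s, t), mulMap_mem h' hst, ?_⟩,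
          ⟨mulMap a b (s, t), mulMap_mem h hst, ?_⟩⟩ <;>
        · simp only [mulMap]; rw [← h]
          ext <;> simp only <;> ring
    · rw [Set.eq_empty_iff_forall_notMem]
      intro v hv
      obtain ⟨s, t, -, hst⟩ := key v hv
      exact hd (by exact_mod_cast Dvd.intro _ hst)
  have := Set.ncard_union_add_ncard_inter (mulMap a b '' repSet m) (mulMap a (-b) '' repSet m)
    ((repSet_finite m).image _) ((repSet_finite m).image _)
  rw [← hU, hI, Set.ncard_image_of_injective _ hi, Set.ncard_image_of_injective _ hi'] at this
  rw [two_mul, ← this]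
  congr 1
  split_ifs with hd
  · rw [Set.ncard_image_of_injective]
    rintro ⟨x, y⟩ ⟨x', y'⟩ he
    simp only [Prod.mk.injEq] at he
    rw [mul_left_cancel₀ hp0 he.1, mul_left_cancel₀ hp0 he.2]
  · simp

/-- If `-3` is not a square modulo `p`, then `p` divides both coordinates of every representation of
`pm`. -/
lemma repSet_ncard_inert {p m : ℕ} [Fact p.Prime] (h : legendreSym p (-3) = -1) :
    (repSet (p * m)).ncard = if p ∣ m then (repSet (m / p)).ncard else 0 := by
  have hp : p.Prime := Fact.out
  have hp0 : (p : ℤ) ≠ 0 := by exact_mod_cast hp.ne_zero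
  have key : ∀ v ∈ repSet (p * m),
      ∃ s t : ℤ, v = (p * s, p * t) ∧ p * (s ^ 2 + 3 * t ^ 2) = m := by
    intro v hv
    simp only [repSet, Set.mem_ofPred_eq] at hv
    push_cast at hv
    obtain ⟨⟨s, hs⟩, ⟨t, ht⟩⟩ := legendreSym.prime_dvd_of_eq_neg_one h (x := v.1) (y := v.2)
      ⟨m, by linear_combination hv⟩
    refine ⟨s, t, Prod.ext hs ht, ?_⟩
    rw [hs, ht] at hv
    apply mul_left_cancel₀ hp0
    linear_combination hv
  split_ifs with hd
  · obtain ⟨k, rfl⟩ := hd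
    rw [Nat.mul_div_cancel_left _ hp.pos]
    have : repSet (p * (p * k)) = (fun v : ℤ × ℤ => ((p : ℤ) * v.1, (p : ℤ) * v.2)) '' repSet k := by
      ext v
      constructor
      · intro hv
        obtain ⟨s, t, rfl, hst⟩ := key v hv
        refine ⟨(s, t), ?_, rfl⟩
        simp only [repSet, Set.mem_ofPred_eq]
        push_cast at hst
        exact mul_left_cancel₀ hp0 hst
      · rintro ⟨⟨s, t⟩, hst, rfl⟩
        simp only [repSet, Set.mem_ofPred_eq] at hst ⊢
        push_cast
        rw [← hst]; ring
    rw [this, Set.ncard_image_of_injective]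
    rintro ⟨x, y⟩ ⟨x', y'⟩ he
    simp only [Prod.mk.injEq] at he
    rw [mul_left_cancel₀ hp0 he.1, mul_left_cancel₀ hp0 he.2]
  · rw [Set.ncard_eq_zero (repSet_finite _), Set.eq_empty_iff_forall_notMem]
    intro v hv
    obtain ⟨s, t, -, hst⟩ := key v hv
    exact hd (by exact_mod_cast Dvd.intro _ hst)

lemma repSet_ncard_three (m : ℕ) : (repSet (3 * m)).ncard = (repSet m).ncard := by
  have : repSet (3 * m) = (fun v : ℤ × ℤ => (3 * v.2, v.1)) '' repSet m := by
    ext ⟨X, Y⟩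
    simp only [repSet, Set.mem_ofPred_eq, Set.mem_image, Prod.exists]
    push_cast
    constructor
    · intro (h : X ^ 2 + 3 * Y ^ 2 = 3 * (m : ℤ))
      have : (3 : ℤ) ∣ X := by
        have : (3 : ℤ) ∣ X ^ 2 := ⟨m - Y ^ 2, by linarith⟩
        exact Int.prime_three.dvd_of_dvd_pow this
      obtain ⟨s, rfl⟩ := this
      exact ⟨Y, s, by linarith, by simp⟩
    · rintro ⟨x, y, h, he⟩
      simp only [Prod.mk.injEq] at he
      rw [← h, ← he.1, ← he.2]; ring
  rw [this, Set.ncard_image_of_injective]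
  rintro ⟨x, y⟩ ⟨x', y'⟩ he
  simp only [Prod.mk.injEq] at he
  ext <;> simp only <;> omega

lemma not_isSquare_two_zmod_three : ¬ IsSquare (((2 : ℤ)) : ZMod 3) := by decide

/-- A case of quadratic reciprocity. -/
lemma legendre_neg_three {p : ℕ} [Fact p.Prime] (hp2 : p ≠ 2) (hp3 : p ≠ 3) :
    legendreSym p (-3) = chi p := by
  have hp : p.Prime := Fact.out
  have : Fact (Nat.Prime 3) := ⟨Nat.prime_three⟩
  have h1 := legendreSym.quadratic_reciprocity' (p := p) (q := 3) hp2 (by norm_num)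
  have hodd : p % 2 = 1 := hp.eq_two_or_odd.resolve_left hp2
  have h2 : legendreSym p (-3) = legendreSym p (-1) * legendreSym p 3 := by
    rw [← legendreSym.mul]; norm_num
  rw [legendreSym.at_neg_one hp2, ZMod.χ₄_eq_neg_one_pow hodd] at h2
  have h3 : legendreSym p (-3) = legendreSym 3 p := by
    rw [h2, h1]; norm_num
  rw [h3, legendreSym.mod]
  have hm : p % 3 = 1 ∨ p % 3 = 2 := by
    have : p % 3 ≠ 0 := fun h =>
      hp3 ((Nat.prime_dvd_prime_iff_eq Nat.prime_three hp).1 (Nat.dvd_of_mod_eq_zero h)).symm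
    omega
  unfold chi
  rcases hm with h | h
  · have : ((p : ℤ) % ((3 : ℕ) : ℤ)) = 1 := by omega
    rw [this, h]; simp
  · have : ((p : ℤ) % ((3 : ℕ) : ℤ)) = 2 := by omega
    rw [this, h]
    have h2 : legendreSym 3 2 = -1 := by
      rw [legendreSym.eq_neg_one_iff]
      exact not_isSquare_two_zmod_three
    simpa using h2

/-- For odd `n` the number of representations by `x² + 3y²` is `2 ∑_{d ∣ n} χ(d)`: both
sides satisfy the recursion of `chiSum_prime_mul` for the smallest prime factor of `n`. -/
lemma repSet_ncard_odd (n : ℕ) (hn : n % 2 = 1) : ((repSet n).ncard : ℤ) = 2 * chiSum n := by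
  induction n using Nat.strong_induction_on with
  | _ n ih =>
  by_cases h1 : n = 1
  · subst h1
    have : repSet 1 = {(1, 0), (-1, 0)} := by
      ext ⟨x, y⟩
      simp only [repSet, Set.mem_ofPred_eq, Set.mem_insert_iff, Set.mem_singleton_iff,
        Prod.mk.injEq]
      constructor
      · intro h
        have hy : y = 0 := by
          have : y ^ 2 < 1 := by push_cast at h; nlinarith [sq_nonneg x]
          exact pow_eq_zero_iff two_ne_zero |>.1 (le_antisymm (by omega) (sq_nonneg y))
        subst hy
        have h' : x ^ 2 = 1 := by push_cast at h; linarith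
        rcases sq_eq_one_iff.1 h' with h | h
        all_goals simp [h]
      · rintro (⟨rfl, rfl⟩ | ⟨rfl, rfl⟩) <;> norm_num
    rw [this, Set.ncard_pair (by decide)]
    decide
  · have hp := Nat.minFac_prime h1
    obtain ⟨m, hm⟩ := Nat.minFac_dvd n
    set p := n.minFac with hpdef
    have : Fact p.Prime := ⟨hp⟩
    have hm0 : 0 < m := by
      rcases Nat.eq_zero_or_pos m with h | h
      · subst h; omega
      · exact h
    have hodd : p % 2 = 1 ∧ m % 2 = 1 := by
      have := Nat.odd_iff.2 hn
      rw [hm, Nat.odd_mul] at this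
      exact ⟨Nat.odd_iff.1 this.1, Nat.odd_iff.1 this.2⟩
    have hp2 : p ≠ 2 := by intro h; omega
    have hmn : m < n := by rw [hm]; nlinarith [hp.two_le]
    have ih1 := ih m hmn hodd.2
    have hE := chiSum_prime_mul hp hm0
    rw [hm]
    have ih2 : ((if p ∣ m then (repSet (m / p)).ncard else 0 : ℕ) : ℤ)
        = 2 * (if p ∣ m then chiSum (m / p) else 0) := by
      split_ifs with hd
      · obtain ⟨k, rfl⟩ := hd
        rw [Nat.mul_div_cancel_left _ hp.pos]
        have hk : k % 2 = 1 := by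
          have := Nat.odd_iff.2 hodd.2
          rw [Nat.odd_mul] at this
          exact Nat.odd_iff.1 this.2
        exact ih k (lt_of_le_of_lt (Nat.le_mul_of_pos_left _ hp.pos) hmn) hk
      · simp
    by_cases hp3 : p = 3
    · rw [hp3] at hE ⊢
      rw [repSet_ncard_three, ih1]
      simp [chi] at hE
      rw [hE]
    · have hl := legendre_neg_three hp2 hp3
      rcases legendreSym.eq_one_or_neg_one p (a := -3) (by
        intro h0
        have := (legendreSym.eq_zero_iff p (-3)).2 h0
        rw [hl] at this
        have hm' : p % 3 ≠ 0 := fun h =>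
          hp3 ((Nat.prime_dvd_prime_iff_eq Nat.prime_three hp).1 (Nat.dvd_of_mod_eq_zero h)).symm
        unfold chi at this
        split_ifs at this <;> omega) with h | h
      · obtain ⟨a, b, hab⟩ := exists_rep_of_legendre hp2 h
        have := repSet_ncard_split (m := m) hp hp2 hp3 hab
        rw [← hl, h] at hE
        have h4 := congrArg (Nat.cast : ℕ → ℤ) this
        rw [Nat.cast_add, ih2, Nat.cast_mul, ih1] at h4
        push_cast at h4
        linarith
      · have := repSet_ncard_inert (m := m) h
        rw [← hl, h] at hE
        rw [this, ih2]
        linarith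

/-! ### The square of a Lambert series -/

/-- The terms `q^a/(1 - q^{2a})`, `a = 2i + 1`, of the Lambert series. -/
noncomputable def lamV (q : ℂ) (i : ℕ) : ℂ := q ^ (2 * i + 1) / (1 - (q ^ (2 * i + 1)) ^ 2)

/-- The terms `q^{2a}/(1 - q^{2a})`, `a = 2i + 1`. -/
noncomputable def lamW (q : ℂ) (i : ℕ) : ℂ := (q ^ (2 * i + 1)) ^ 2 / (1 - (q ^ (2 * i + 1)) ^ 2)

/-- The terms `q^m/(1 - q^{2m})`, `m = 2(n + 1)`. -/
noncomputable def lamU (q : ℂ) (n : ℕ) : ℂ := q ^ (2 * (n + 1)) / (1 - (q ^ (2 * (n + 1))) ^ 2)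

lemma one_sub_sq_ne_zero {x : ℂ} (hx : ‖x‖ < 1) : 1 - x ^ 2 ≠ 0 := by
  intro h
  have h1 : ‖x ^ 2‖ = 1 := by rw [← sub_eq_zero.1 h, norm_one]
  exact absurd h1 (norm_pow_lt hx two_pos).ne

lemma norm_one_sub_sq_ge {q : ℂ} (hq : ‖q‖ < 1) {k : ℕ} (hk : 0 < k) :
    1 - ‖q‖ ≤ ‖1 - (q ^ k) ^ 2‖ := by
  have h1 : ‖(q ^ k) ^ 2‖ ≤ ‖q‖ := by
    rw [norm_pow, norm_pow, ← pow_mul]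
    exact pow_le_of_le_one (norm_nonneg _) hq.le (by positivity)
  have h2 := norm_sub_norm_le (1 : ℂ) ((q ^ k) ^ 2)
  rw [norm_one] at h2
  linarith

lemma lam_summable {q : ℂ} (hq : ‖q‖ < 1) {e : ℕ → ℕ} (he : ∀ i, i ≤ e i) {k : ℕ → ℕ}
    (hk : ∀ i, 0 < k i) : Summable fun i => ‖q ^ e i / (1 - (q ^ k i) ^ 2)‖ := by
  have hg := (summable_geometric_of_lt_one (norm_nonneg q) hq).mul_right (1 - ‖q‖)⁻¹
  refine hg.of_nonneg_of_le (fun _ => norm_nonneg _) fun i => ?_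
  rw [norm_div, norm_pow, div_eq_mul_inv]
  have h0 : 0 < 1 - ‖q‖ := by linarith
  have h1 := norm_one_sub_sq_ge hq (hk i)
  gcongr ?_ * ?_
  · exact pow_le_pow_of_le_one (norm_nonneg _) hq.le (he i)
  · gcongr

lemma lamV_summable {q : ℂ} (hq : ‖q‖ < 1) : Summable fun i => ‖lamV q i‖ :=
  lam_summable hq (e := fun i => 2 * i + 1) (fun i => by omega) (fun i => by omega)

lemma lamW_summable {q : ℂ} (hq : ‖q‖ < 1) : Summable fun i => ‖lamW q i‖ := by
  have := lam_summable hq (e := fun i => (2 * i + 1) * 2) (k := fun i => 2 * i + 1)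
    (fun i => by omega) (fun i => by omega)
  simpa only [lamW, pow_mul] using this

/-- A partial fraction identity. With `a = 2i + 1` and `b = 2k + 1`, the first factor on the right
depends only on `a + b`. -/
lemma lamV_mul {q : ℂ} (hq : ‖q‖ < 1) (i k : ℕ) :
    lamV q i * lamV q k = lamU q (i + k) * (1 + lamW q i + lamW q k) := by
  have h1 := one_sub_sq_ne_zero (norm_pow_lt hq (k := 2 * i + 1) (by omega))
  have h2 := one_sub_sq_ne_zero (norm_pow_lt hq (k := 2 * k + 1) (by omega))
  have h3 := one_sub_sq_ne_zero (norm_pow_lt hq (k := 2 * (i + k + 1)) (by omega))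
  have e : q ^ (2 * (i + k + 1)) = q ^ (2 * i + 1) * q ^ (2 * k + 1) := by
    rw [← pow_add]; congr 1; ring
  unfold lamV lamW lamU
  rw [e, mul_pow] at h3 ⊢
  generalize q ^ (2 * i + 1) = X at *
  generalize q ^ (2 * k + 1) = Y at *
  field_simp
  ring

/-- A partial fraction identity, in which the first factor on the right depends only on the
difference of the two indices. -/
lemma lamV_mul_add {q : ℂ} (hq : ‖q‖ < 1) (k n : ℕ) :
    lamV q k * lamV q (k + (n + 1)) = lamU q n * (lamW q k - lamW q (k + (n + 1))) := by
  have h1 := one_sub_sq_ne_zero (norm_pow_lt hq (k := 2 * k + 1) (by omega))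
  have h2 := one_sub_sq_ne_zero (norm_pow_lt hq (k := 2 * (k + (n + 1)) + 1) (by omega))
  have h3 := one_sub_sq_ne_zero (norm_pow_lt hq (k := 2 * (n + 1)) (by omega))
  have e : q ^ (2 * (k + (n + 1)) + 1) = q ^ (2 * k + 1) * q ^ (2 * (n + 1)) := by
    rw [← pow_add]; congr 1; ring
  unfold lamV lamW lamU
  rw [e, mul_pow] at h2 ⊢
  generalize q ^ (2 * k + 1) = X at *
  generalize q ^ (2 * (n + 1)) = Y at *
  field_simp
  ring

/-- The sum of the products with a given `a + b`. -/
lemma lamV_antidiagonal {q : ℂ} (hq : ‖q‖ < 1) (n : ℕ) :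
    ∑ p ∈ Finset.HasAntidiagonal.antidiagonal n, lamV q p.1 * lamV q p.2
      = lamU q n * ((n + 1) + 2 * ∑ i ∈ Finset.range (n + 1), lamW q i) := by
  have h : ∀ p ∈ Finset.HasAntidiagonal.antidiagonal n, lamV q p.1 * lamV q p.2
      = lamU q n * (1 + lamW q p.1 + lamW q p.2) := by
    intro p hp
    rw [lamV_mul hq, Finset.HasAntidiagonal.mem_antidiagonal.1 hp]
  have h1 : ∑ p ∈ Finset.HasAntidiagonal.antidiagonal n, lamW q p.2
      = ∑ p ∈ Finset.HasAntidiagonal.antidiagonal n, lamW q p.1 :=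
    Finset.Nat.sum_antidiagonal_swap (f := fun p => lamW q p.1)
  have h2 : ∑ p ∈ Finset.HasAntidiagonal.antidiagonal n, lamW q p.1
      = ∑ i ∈ Finset.range (n + 1), lamW q i :=
    Finset.Nat.sum_antidiagonal_eq_sum_range_succ_mk (fun p => lamW q p.1) n
  rw [Finset.sum_congr rfl h, ← Finset.mul_sum, Finset.sum_add_distrib, Finset.sum_add_distrib, h1,
    h2, Finset.sum_const, Finset.Nat.card_antidiagonal]
  simp only [nsmul_eq_mul, mul_one]
  push_cast
  ring

/-- The sum of the products with a given difference `b - a > 0`, which telescopes. -/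
lemma lamV_shift {q : ℂ} (hq : ‖q‖ < 1) (n : ℕ) :
    ∑' k, lamV q k * lamV q (k + (n + 1))
      = lamU q n * ∑ i ∈ Finset.range (n + 1), lamW q i := by
  have hw := (lamW_summable hq).of_norm
  rw [tsum_congr fun k => lamV_mul_add hq k n, tsum_mul_left,
    hw.tsum_sub ((summable_nat_add_iff (n + 1)).2 hw), ← hw.sum_add_tsum_nat_add (n + 1),
    add_sub_cancel_right]

lemma tsum_eq_tsum_antidiagonal {F : ℕ × ℕ → ℂ} (hF : Summable F) :
    (Summable fun n => ∑ p ∈ Finset.HasAntidiagonal.antidiagonal n, F p) ∧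
    ∑' p, F p = ∑' n, ∑ p ∈ Finset.HasAntidiagonal.antidiagonal n, F p := by
  have h1 : HasSum (F ∘ Finset.HasAntidiagonal.sigmaAntidiagonalEquivProd) (∑' p, F p) :=
    (Equiv.hasSum_iff _).2 hF.hasSum
  have h2 := h1.sigma (g := fun n => ∑ p ∈ Finset.HasAntidiagonal.antidiagonal n, F p) fun n =>
    Finset.hasSum _ F
  exact ⟨h2.summable, h2.tsum_eq.symm⟩

/-- `ℕ²` is the disjoint union of the diagonal and the parts above and below it. -/
lemma trichotomy_bijective :
    Function.Bijective (Sum.elim (fun i : ℕ => (i, i))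
      (Sum.elim (fun v : ℕ × ℕ => (v.2, v.2 + (v.1 + 1)))
        (fun v : ℕ × ℕ => (v.2 + (v.1 + 1), v.2)))) := by
  constructor
  · rintro (x | ⟨x, x'⟩ | ⟨x, x'⟩) (y | ⟨y, y'⟩ | ⟨y, y'⟩) h <;>
      simp only [Sum.elim_inl, Sum.elim_inr, Prod.mk.injEq] at h
    · congr 1; omega
    · omega
    · omega
    · omega
    · congr 3 <;> omega
    · omega
    · omega
    · omega
    · congr 3 <;> omega
  · rintro ⟨x, y⟩
    rcases lt_trichotomy x y with h | h | h
    · exact ⟨Sum.inr (Sum.inl (y - x - 1, x)), by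
        ext <;> [simp only [Sum.elim_inl, Sum.elim_inr]; (simp only [Sum.elim_inl, Sum.elim_inr]; omega)]⟩
    · exact ⟨Sum.inl x, by ext <;> simp only [Sum.elim_inl] <;> omega⟩
    · exact ⟨Sum.inr (Sum.inr (x - y - 1, y)), by
        ext <;> simp only [Sum.elim_inr] <;> omega⟩

lemma tsum_trichotomy {F : ℕ × ℕ → ℂ} (hF : Summable F) :
    (Summable fun n => ∑' k, F (k, k + (n + 1))) ∧ (Summable fun n => ∑' k, F (k + (n + 1), k)) ∧
    ∑' p, F p = ∑' i, F (i, i) + (∑' n, ∑' k, F (k, k + (n + 1)) + ∑' n, ∑' k, F (k + (n + 1), k)) := by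
  have h : Summable (F ∘ Equiv.ofBijective _ trichotomy_bijective) := (Equiv.summable_iff _).2 hF
  have h1 := h.comp_injective Sum.inl_injective
  have h2 := h.comp_injective Sum.inr_injective
  have h3 : Summable fun v : ℕ × ℕ => F (v.2, v.2 + (v.1 + 1)) :=
    h2.comp_injective Sum.inl_injective
  have h4 : Summable fun v : ℕ × ℕ => F (v.2 + (v.1 + 1), v.2) :=
    h2.comp_injective Sum.inr_injective
  refine ⟨h3.prod, h4.prod, ?_⟩
  have e1 := Summable.tsum_sum (f := F ∘ Equiv.ofBijective _ trichotomy_bijective) h1 h2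
  have e2 := Summable.tsum_sum (f := (F ∘ Equiv.ofBijective _ trichotomy_bijective) ∘ Sum.inr)
    (h2.comp_injective Sum.inl_injective) (h2.comp_injective Sum.inr_injective)
  rw [← (Equiv.ofBijective _ trichotomy_bijective).tsum_eq F]
  refine e1.trans ?_
  congr 1
  refine e2.trans ?_
  rw [← h3.tsum_prod, ← h4.tsum_prod]
  rfl

/-- The indicator function of the multiples of `3`. -/
def ind3 (n : ℕ) : ℤ := if 3 ∣ n then 1 else 0

lemma chi_odd_mul_self (i : ℕ) : chi (2 * i + 1) * chi (2 * i + 1) = 1 - ind3 (i + i + 1) := by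
  unfold chi ind3; split_ifs <;> first | rfl | omega

lemma chi_odd_mul_add (k n : ℕ) :
    chi (2 * k + 1) * chi (2 * (k + (n + 1)) + 1) = ind3 (n + 1) - ind3 (k + (k + (n + 1)) + 1) := by
  unfold chi ind3; split_ifs <;> first | rfl | omega

lemma summable_bdd_mul {F : ℕ × ℕ → ℂ} (hF : Summable fun p => ‖F p‖) {c : ℕ × ℕ → ℤ}
    (hc : ∀ p, |c p| ≤ 1) : Summable fun p => (c p : ℂ) * F p := by
  refine Summable.of_norm_bounded hF fun p => ?_
  rw [norm_mul]
  have : ‖(c p : ℂ)‖ ≤ 1 := by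
    rw [Complex.norm_intCast]; exact_mod_cast hc p
  exact mul_le_of_le_one_left (norm_nonneg _) this

lemma abs_chi_le (n : ℕ) : |chi n| ≤ 1 := by unfold chi; split_ifs <;> simp

lemma abs_ind3_le (n : ℕ) : |ind3 n| ≤ 1 := by unfold ind3; split_ifs <;> simp

/-- The square of the Lambert series. For odd `a`, `b`, the product `χ(a)χ(b)` is the difference of
the indicators of `3 ∣ a - b` and `3 ∣ a + b`; the terms with given `a - b` or `a + b` are summed by
`lamV_shift` and `lamV_antidiagonal`, and the sums of the `q^{2a}/(1 - q^{2a})` cancel. -/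
lemma lambert_sq {q : ℂ} (hq : ‖q‖ < 1) :
    (∑' i, (chi (2 * i + 1) : ℂ) * lamV q i) ^ 2
      = ∑' i, lamV q i ^ 2 - ∑' n, (ind3 (n + 1) : ℂ) * ((n + 1) * lamU q n) := by
  have hV := lamV_summable hq
  have hVV : Summable fun p : ℕ × ℕ => ‖lamV q p.1 * lamV q p.2‖ :=
    (summable_mul_of_summable_norm hV hV).norm
  -- the part of the product with `3 ∣ a + b`
  have hF2 := summable_bdd_mul hVV (c := fun p => ind3 (p.1 + p.2 + 1)) fun p => abs_ind3_le _
  have hcV : Summable fun i => ‖(chi (2 * i + 1) : ℂ) * lamV q i‖ := by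
    refine hV.of_nonneg_of_le (fun _ => norm_nonneg _) fun i => ?_
    rw [norm_mul]
    refine mul_le_of_le_one_left (norm_nonneg _) ?_
    rw [Complex.norm_intCast]; exact_mod_cast abs_chi_le _
  have hF := summable_mul_of_summable_norm hcV hcV
  obtain ⟨a1, a2⟩ := tsum_eq_tsum_antidiagonal hF2
  have a3 : ∀ n, ∑ p ∈ Finset.HasAntidiagonal.antidiagonal n,
      (ind3 (p.1 + p.2 + 1) : ℂ) * (lamV q p.1 * lamV q p.2)
      = (ind3 (n + 1) : ℂ) * ((n + 1) * lamU q n)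
        + 2 * ((ind3 (n + 1) : ℂ) * (lamU q n * ∑ i ∈ Finset.range (n + 1), lamW q i)) := by
    intro n
    have : ∀ p ∈ Finset.HasAntidiagonal.antidiagonal n,
        (ind3 (p.1 + p.2 + 1) : ℂ) * (lamV q p.1 * lamV q p.2)
        = (ind3 (n + 1) : ℂ) * (lamV q p.1 * lamV q p.2) := by
      intro p hp
      rw [Finset.HasAntidiagonal.mem_antidiagonal.1 hp]
    rw [Finset.sum_congr rfl this, ← Finset.mul_sum, lamV_antidiagonal hq]
    ring
  simp only [a3] at a1 a2
  have hF1 := hF.add hF2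
  obtain ⟨b1, -, b3⟩ := tsum_trichotomy hF1
  have c1 : ∀ n k : ℕ, (chi (2 * k + 1) : ℂ) * lamV q k
      * ((chi (2 * (k + (n + 1)) + 1) : ℂ) * lamV q (k + (n + 1)))
      + (ind3 (k + (k + (n + 1)) + 1) : ℂ) * (lamV q k * lamV q (k + (n + 1)))
      = (ind3 (n + 1) : ℂ) * (lamV q k * lamV q (k + (n + 1))) := by
    intro n k
    have := congrArg (Int.cast : ℤ → ℂ) (chi_odd_mul_add k n)
    push_cast at this
    linear_combination (lamV q k * lamV q (k + (n + 1))) * this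
  have c2 : ∀ n k : ℕ, (chi (2 * (k + (n + 1)) + 1) : ℂ) * lamV q (k + (n + 1))
      * ((chi (2 * k + 1) : ℂ) * lamV q k)
      + (ind3 ((k + (n + 1)) + k + 1) : ℂ) * (lamV q (k + (n + 1)) * lamV q k)
      = (ind3 (n + 1) : ℂ) * (lamV q k * lamV q (k + (n + 1))) := by
    intro n k
    rw [← c1 n k, add_comm (k + (n + 1)) k]; ring
  have c3 : ∀ i : ℕ, (chi (2 * i + 1) : ℂ) * lamV q i * ((chi (2 * i + 1) : ℂ) * lamV q i)
      + (ind3 (i + i + 1) : ℂ) * (lamV q i * lamV q i) = lamV q i ^ 2 := by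
    intro i
    have := congrArg (Int.cast : ℤ → ℂ) (chi_odd_mul_self i)
    push_cast at this
    linear_combination lamV q i ^ 2 * this
  simp only [c1, c2, c3, tsum_mul_left, lamV_shift hq] at b1 b3
  have d1 := (b1.mul_left 2)
  have d3 := a1.tsum_sub d1
  rw [hF.tsum_add hF2, a2] at b3
  simp only [add_sub_cancel_right, tsum_mul_left] at d3
  rw [sq, tsum_mul_tsum_of_summable_norm hcV hcV]
  linear_combination b3 + d3

/-- Collecting equal exponents in a weighted sum of powers of `q` with finitely many terms of each
exponent. -/
lemma GF.of_weights {ι : Type*} (e : ι → ℕ) (w : ι → ℂ) (s : ℕ → Finset ι)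
    (hse : ∀ n i, i ∈ s n ↔ e i = n)
    (hs : ∀ q : ℂ, ‖q‖ < 1 → Summable fun i => w i * q ^ e i) :
    GF (fun q => ∑' i, w i * q ^ e i) (fun n => ∑ i ∈ s n, w i) := by
  intro q hq
  have h1 : HasSum ((fun i => w i * q ^ e i) ∘ Equiv.sigmaFiberEquiv e) (∑' i, w i * q ^ e i) :=
    (Equiv.hasSum_iff _).2 (hs q hq).hasSum
  refine h1.sigma fun n => ?_
  have h2 := Finset.hasSum (s n) (fun i => w i * q ^ e i)
  have h3 : ∑ i ∈ s n, w i * q ^ e i = (∑ i ∈ s n, w i) * q ^ n := by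
    rw [Finset.sum_mul]
    refine Finset.sum_congr rfl fun i hi => ?_
    rw [(hse n i).1 hi]
  rw [h3] at h2
  exact (Equiv.hasSum_iff (Equiv.subtypeEquivRight fun i => (hse n i).symm)).2 h2

lemma summable_double {q : ℂ} (hq : ‖q‖ < 1) (e : ℕ × ℕ → ℕ) (he : ∀ p, p.1 + p.2 ≤ e p)
    (w : ℕ × ℕ → ℂ) (hw : ∀ p, ‖w p‖ ≤ p.1 + 1) : Summable fun p => w p * q ^ e p := by
  have g1 := summable_geometric_of_lt_one (norm_nonneg q) hq
  have g2 : Summable fun n : ℕ => ((n : ℝ) + 1) * ‖q‖ ^ n := by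
    have := summable_pow_mul_geometric_of_norm_lt_one 1 (r := ‖q‖) (by simpa using hq)
    simpa [add_mul] using this.add g1
  have g3 : Summable fun p : ℕ × ℕ => (((p.1 : ℝ) + 1) * ‖q‖ ^ p.1) * ‖q‖ ^ p.2 :=
    g2.mul_of_nonneg g1 (fun _ => by positivity) (fun _ => by positivity)
  refine Summable.of_norm_bounded g3 fun p => ?_
  rw [norm_mul, norm_pow, mul_assoc, ← pow_add]
  exact mul_le_mul (hw p) (pow_le_pow_of_le_one (norm_nonneg _) hq.le (he p)) (by positivity)
    (by positivity)

/-- The Lambert series `∑_{a, b odd} χ(a) Q^{(ab - 1)/2}`, with `a = 2i + 1` and `b = 2j + 1`. -/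
noncomputable def lam (q : ℂ) : ℂ :=
  ∑' p : ℕ × ℕ, (chi (2 * p.1 + 1) : ℂ) * q ^ (2 * p.1 * p.2 + p.1 + p.2)

lemma lam_summable' {q : ℂ} (hq : ‖q‖ < 1) :
    Summable fun p : ℕ × ℕ => (chi (2 * p.1 + 1) : ℂ) * q ^ (2 * p.1 * p.2 + p.1 + p.2) := by
  refine summable_double hq (fun p => 2 * p.1 * p.2 + p.1 + p.2) (fun p => ?_)
    (fun p => (chi (2 * p.1 + 1) : ℂ)) fun p => ?_
  · nlinarith
  · rw [Complex.norm_intCast]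
    have : ((|chi (2 * p.1 + 1)| : ℤ) : ℝ) ≤ 1 := by exact_mod_cast abs_chi_le _
    rw [← Int.cast_abs]
    have h2 : (0 : ℝ) ≤ p.1 := by positivity
    linarith

lemma GF_lam : GF lam (fun k => (chiSum (2 * k + 1) : ℂ)) := by
  have h : GF lam _ := GF.of_weights (fun p : ℕ × ℕ => 2 * p.1 * p.2 + p.1 + p.2)
    (fun p => (chi (2 * p.1 + 1) : ℂ))
    (fun n => (Finset.range (n + 1) ×ˢ Finset.range (n + 1)).filter
      fun p => 2 * p.1 * p.2 + p.1 + p.2 = n)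
    (fun n p => by
      simp only [Finset.mem_filter, Finset.mem_product, Finset.mem_range, and_iff_right_iff_imp]
      intro h; constructor <;> nlinarith [Nat.zero_le (p.1 * p.2)])
    fun q hq => lam_summable' hq
  have hc : ∀ k, (chiSum (2 * k + 1) : ℂ)
      = ∑ p ∈ (Finset.range (k + 1) ×ˢ Finset.range (k + 1)).filter
        (fun p => 2 * p.1 * p.2 + p.1 + p.2 = k), (chi (2 * p.1 + 1) : ℂ) := ?_
  · simp only [hc]; exact h
  intro k
  unfold chiSum
  push_cast
  symm
  refine Finset.sum_bij (fun p _ => 2 * p.1 + 1) ?_ ?_ ?_ ?_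
  · intro p hp
    rw [Finset.mem_filter] at hp
    rw [Nat.mem_divisors]
    refine ⟨⟨2 * p.2 + 1, ?_⟩, by omega⟩
    rw [← hp.2]; ring
  · intro p hp p' hp' h
    rw [Finset.mem_filter] at hp hp'
    have h1 : p.1 = p'.1 := by omega
    have h2 : (2 * p.1 + 1) * (2 * p.2 + 1) = (2 * p.1 + 1) * (2 * p'.2 + 1) := by
      have := hp'.2
      rw [← h1] at this
      linear_combination 2 * hp.2 - 2 * this
    have h3 := Nat.eq_of_mul_eq_mul_left (by omega) h2
    exact Prod.ext h1 (by omega)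
  · intro d hd
    obtain ⟨⟨e, he⟩, -⟩ := Nat.mem_divisors.1 hd
    have hde : Odd (d * e) := ⟨k, he.symm⟩
    obtain ⟨⟨i, rfl⟩, ⟨j, rfl⟩⟩ := Nat.odd_mul.1 hde
    have h1 : 2 * i * j + i + j = k := by nlinarith
    refine ⟨(i, j), ?_, rfl⟩
    simp only [Finset.mem_filter, Finset.mem_product, Finset.mem_range]
    exact ⟨⟨by nlinarith [Nat.zero_le (i * j)], by nlinarith [Nat.zero_le (i * j)]⟩, h1⟩
  · intro p hp; rfl

/-- The number of exponents `(u² + 3v² - 1)/2 = k` is the number of representations of `2k + 1`. -/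
lemma card_oddExp (k : ℕ) : Nat.card {i // oddExp i = k} = (repSet (2 * k + 1)).ncard := by
  have key : ∀ v : ℤ × ℤ,
      2 * ((6 * sqn v.1 + 4 * tri v.2 : ℕ) : ℤ) + 1 = (2 * v.2 - 1) ^ 2 + 3 * (2 * v.1) ^ 2 ∧
      2 * ((2 * sqn v.1 + 12 * tri v.2 + 1 : ℕ) : ℤ) + 1
        = (2 * v.1) ^ 2 + 3 * (2 * v.2 - 1) ^ 2 := by
    intro v
    have h := two_mul_tri v.2
    push_cast
    rw [cast_sqn]
    constructor
    · linear_combination 4 * h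
    · linear_combination 12 * h
  set g : (ℤ × ℤ) ⊕ (ℤ × ℤ) → ℤ × ℤ :=
    Sum.elim (fun v => (2 * v.2 - 1, 2 * v.1)) (fun v => (2 * v.1, 2 * v.2 - 1)) with hg
  have hinj : Function.Injective g := by
    rintro (⟨x, x'⟩ | ⟨x, x'⟩) (⟨y, y'⟩ | ⟨y, y'⟩) h <;>
      simp only [hg, Sum.elim_inl, Sum.elim_inr, Prod.mk.injEq] at h
    · congr 2 <;> omega
    · omega
    · omega
    · congr 2 <;> omega
  have hgk : ∀ i, 2 * (oddExp i : ℤ) + 1 = (g i).1 ^ 2 + 3 * (g i).2 ^ 2 := by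
    rintro (v | v)
    · exact (key v).1
    · exact (key v).2
  have himg : g '' {i | oddExp i = k} = repSet (2 * k + 1) := by
    ext ⟨u, v⟩
    constructor
    · rintro ⟨i, hi, h⟩
      have h1 := hgk i
      have h2 : oddExp i = k := hi
      rw [h, h2] at h1
      change u ^ 2 + 3 * v ^ 2 = ((2 * k + 1 : ℕ) : ℤ)
      push_cast; exact h1.symm
    · intro h
      change u ^ 2 + 3 * v ^ 2 = ((2 * k + 1 : ℕ) : ℤ) at h
      push_cast at h
      have hp : ¬ (Even u ↔ Even v) := by
        have : Odd (u ^ 2 + 3 * v ^ 2) := ⟨k, h⟩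
        rw [← Int.not_even_iff_odd] at this
        intro huv
        apply this
        rw [Int.even_add, Int.even_pow' two_ne_zero, Int.even_mul, Int.even_pow' two_ne_zero, huv]
        simp [show ¬ Even (3 : ℤ) by decide]
      obtain ⟨i, hi⟩ : ∃ i, g i = (u, v) := by
        rcases Int.even_or_odd' u with ⟨a, rfl | rfl⟩ <;>
          rcases Int.even_or_odd' v with ⟨b, rfl | rfl⟩
        · simp at hp
        · exact ⟨Sum.inr (a, b + 1), by simp only [hg, Sum.elim_inr]; congr 1; ring⟩
        · exact ⟨Sum.inl (b, a + 1), by simp only [hg, Sum.elim_inl]; congr 1; ring⟩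
        · exact absurd (iff_of_false (Int.not_even_two_mul_add_one a)
            (Int.not_even_two_mul_add_one b)) hp
      refine ⟨i, ?_, hi⟩
      have h1 := hgk i
      rw [hi] at h1
      change oddExp i = k
      simp only at h1
      omega
  rw [← himg, Set.ncard_image_of_injective _ hinj]
  rfl

lemma psi_mul_psi_three_eq_lam {q : ℂ} (hq : ‖q‖ < 1) : psi q * psi (q ^ 3) = 4 * lam q := by
  have h1 := GF.of_exponents oddExp (fun q hq => (psi_mul_psi_three_aux hq).1) q hq
  have h2 := (GF_lam q hq).mul_left 2
  have h3 : ∀ k, (Nat.card {i // oddExp i = k} : ℂ) * q ^ k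
      = 2 * ((chiSum (2 * k + 1) : ℂ) * q ^ k) := by
    intro k
    have := repSet_ncard_odd (2 * k + 1) (by omega)
    have h := congrArg (Int.cast : ℤ → ℂ) this
    push_cast at h
    rw [card_oddExp, h]; ring
  simp only [h3] at h1
  have h4 := h1.unique h2
  rw [psi_mul_psi_three hq, ← (psi_mul_psi_three_aux hq).2, h4]
  ring

lemma tsum_odd_pow {x : ℂ} (hx : ‖x‖ < 1) : ∑' j : ℕ, x ^ (2 * j + 1) = x / (1 - x ^ 2) := by
  have h := tsum_geometric_of_norm_lt_one (norm_pow_lt hx two_pos)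
  rw [div_eq_mul_inv, ← h, ← tsum_mul_left]
  refine tsum_congr fun j => ?_
  rw [← pow_mul, pow_succ']

/-- The substitution `Q = q²` turns `lam` into the series squared in `lambert_sq`. -/
lemma mul_lam_sq {q : ℂ} (hq : ‖q‖ < 1) :
    q * lam (q ^ 2) = ∑' i, (chi (2 * i + 1) : ℂ) * lamV q i := by
  have hs := lam_summable' (norm_pow_lt hq two_pos)
  rw [lam, ← tsum_mul_left, (hs.mul_left q).tsum_prod]
  refine tsum_congr fun i => ?_
  rw [lamV, ← tsum_odd_pow (norm_pow_lt hq (by omega : 0 < 2 * i + 1)), ← tsum_mul_left]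
  refine tsum_congr fun j => ?_
  rw [mul_left_comm, ← pow_mul, ← pow_mul, ← pow_succ']
  congr 2
  ring

/-- The Lambert series `∑_{3 ∤ d} d Q^d/(1 - Q^{2d})`, with `d = n + 1`. -/
noncomputable def lamSq (q : ℂ) : ℂ :=
  ∑' p : ℕ × ℕ, (((p.1 + 1) * (1 - ind3 (p.1 + 1)) : ℤ) : ℂ) * q ^ ((p.1 + 1) * (2 * p.2 + 1))

lemma lamSq_exp_le (p : ℕ × ℕ) : p.1 + p.2 ≤ (p.1 + 1) * (2 * p.2 + 1) := by nlinarith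

lemma lamSq_summable {q : ℂ} (hq : ‖q‖ < 1) : Summable fun p : ℕ × ℕ =>
    (((p.1 + 1) * (1 - ind3 (p.1 + 1)) : ℤ) : ℂ) * q ^ ((p.1 + 1) * (2 * p.2 + 1)) := by
  refine summable_double hq _ lamSq_exp_le _ fun p => ?_
  rw [Complex.norm_intCast, ← Int.cast_abs]
  have : |((p.1 : ℤ) + 1) * (1 - ind3 (p.1 + 1))| ≤ (p.1 : ℤ) + 1 := by
    rw [abs_mul, abs_of_nonneg (by positivity)]
    exact mul_le_of_le_one_right (by positivity) (by unfold ind3; split_ifs <;> simp)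
  exact_mod_cast this

/-- Expanding `lambert_sq` as a double series. -/
lemma mul_lam_sq_sq {q : ℂ} (hq : ‖q‖ < 1) : (q * lam (q ^ 2)) ^ 2 = lamSq (q ^ 2) := by
  have hq2 := norm_pow_lt hq two_pos
  have s1 : Summable fun p : ℕ × ℕ =>
      ((p.1 : ℂ) + 1) * (q ^ 2) ^ ((p.1 + 1) * (2 * p.2 + 1)) := by
    refine summable_double hq2 _ lamSq_exp_le _ fun p => ?_
    exact (norm_add_le _ _).trans (by simp)
  have s2 : Summable fun p : ℕ × ℕ =>
      ((ind3 (p.1 + 1) : ℂ) * (p.1 + 1)) * (q ^ 2) ^ ((p.1 + 1) * (2 * p.2 + 1)) := by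
    refine summable_double hq2 _ lamSq_exp_le _ fun p => ?_
    rw [norm_mul, Complex.norm_intCast]
    have h1 : |(ind3 (p.1 + 1) : ℝ)| ≤ 1 := by
      rw [← Int.cast_abs]; exact_mod_cast abs_ind3_le _
    have h2 : ‖(p.1 : ℂ) + 1‖ ≤ p.1 + 1 := (norm_add_le _ _).trans (by simp)
    exact (mul_le_of_le_one_left (norm_nonneg _) h1).trans h2
  have e1 : ∑' i, lamV q i ^ 2
      = ∑' p : ℕ × ℕ, ((p.1 : ℂ) + 1) * (q ^ 2) ^ ((p.1 + 1) * (2 * p.2 + 1)) := by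
    have s1' : Summable fun p : ℕ × ℕ =>
        ((p.2 : ℂ) + 1) * (q ^ 2) ^ ((p.2 + 1) * (2 * p.1 + 1)) :=
      (Equiv.summable_iff (Equiv.prodComm ℕ ℕ)).2 s1
    rw [← (Equiv.prodComm ℕ ℕ).tsum_eq]
    refine Eq.trans ?_ s1'.tsum_prod.symm
    refine tsum_congr fun i => ?_
    have h := hasSum_coe_mul_geometric_of_norm_lt_one
      (norm_pow_lt hq2 (by omega : 0 < 2 * i + 1))
    have h2 := h.summable.tsum_eq_zero_add
    rw [h.tsum_eq, Nat.cast_zero, zero_mul, zero_add] at h2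
    have h3 : lamV q i ^ 2 = (q ^ 2) ^ (2 * i + 1) / (1 - (q ^ 2) ^ (2 * i + 1)) ^ 2 := by
      rw [lamV, div_pow, ← pow_mul, ← pow_mul q 2, mul_comm 2 (2 * i + 1)]
    rw [h3, h2]
    refine tsum_congr fun n => ?_
    rw [← pow_mul, mul_comm (2 * i + 1)]
    push_cast; rfl
  have e2 : ∑' n, (ind3 (n + 1) : ℂ) * ((n + 1) * lamU q n)
      = ∑' p : ℕ × ℕ,
        ((ind3 (p.1 + 1) : ℂ) * (p.1 + 1)) * (q ^ 2) ^ ((p.1 + 1) * (2 * p.2 + 1)) := by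
    rw [s2.tsum_prod]
    refine tsum_congr fun n => ?_
    rw [lamU, ← tsum_odd_pow (norm_pow_lt hq (by omega : 0 < 2 * (n + 1))), ← mul_assoc,
      ← tsum_mul_left]
    refine tsum_congr fun i => ?_
    rw [← pow_mul, ← pow_mul, mul_assoc (2 : ℕ)]
  rw [mul_lam_sq hq, lambert_sq hq, e1, e2, lamSq, ← s1.tsum_sub s2]
  refine tsum_congr fun p => ?_
  push_cast; ring

/-- The coefficients of `lamSq`: the sum of the `d` with `3 ∤ d` and `M / d` odd. -/
def kap (M : ℕ) : ℤ :=
  ∑ p ∈ (Finset.range (M + 1) ×ˢ Finset.range (M + 1)).filter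
    (fun p => (p.1 + 1) * (2 * p.2 + 1) = M), ((p.1 + 1) * (1 - ind3 (p.1 + 1)) : ℤ)

lemma GF_K : GF (fun q => q * (psi q * psi (q ^ 3)) ^ 2) (fun M => 16 * (kap M : ℂ)) := by
  have h : GF lamSq _ := GF.of_weights (fun p : ℕ × ℕ => (p.1 + 1) * (2 * p.2 + 1))
    (fun p => (((p.1 + 1) * (1 - ind3 (p.1 + 1)) : ℤ) : ℂ))
    (fun n => (Finset.range (n + 1) ×ˢ Finset.range (n + 1)).filter
      fun p => (p.1 + 1) * (2 * p.2 + 1) = n)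
    (fun n p => by
      simp only [Finset.mem_filter, Finset.mem_product, Finset.mem_range, and_iff_right_iff_imp]
      intro h; constructor <;> nlinarith [Nat.zero_le (p.1 * p.2)])
    fun q hq => lamSq_summable hq
  have h2 := h.const_mul 16
  simp only [← Int.cast_sum] at h2
  refine h2.congr fun Q hQ => ?_
  obtain ⟨q, rfl⟩ := IsAlgClosed.exists_pow_nat_eq Q two_pos
  have hq : ‖q‖ < 1 := by
    rw [norm_pow] at hQ
    exact (pow_lt_one_iff_of_nonneg (norm_nonneg q) two_ne_zero).1 hQ
  rw [psi_mul_psi_three_eq_lam hQ, ← mul_lam_sq_sq hq]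
  ring

/-- For odd `M` every cofactor is odd, and the divisors of `M` prime to `3` are the divisors of its
part prime to `3`. -/
lemma kap_eq {M β n₁ : ℕ} (hM : M % 2 = 1) (h3 : ¬ 3 ∣ n₁) (hfac : M = 3 ^ β * n₁) :
    kap M = ∑ d ∈ n₁.divisors, (d : ℤ) := by
  have hM0 : M ≠ 0 := by omega
  have hdvd : ∀ d, d ∣ n₁ ↔ d ∣ M ∧ ¬ 3 ∣ d := by
    intro d
    constructor
    · intro h
      exact ⟨hfac ▸ h.mul_left _, fun h' => h3 (h'.trans h)⟩
    · rintro ⟨h1, h2⟩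
      rw [hfac] at h1
      exact (Nat.Coprime.pow_right β ((Nat.Prime.coprime_iff_not_dvd Nat.prime_three).2 h2).symm).dvd_of_dvd_mul_left h1
  have hn₁ : n₁ ≠ 0 := by rintro rfl; simp at h3
  have hodd : ∀ d, d ∣ M → ∃ j, d * (2 * j + 1) = M := by
    rintro d ⟨e, he⟩
    have : Odd (d * e) := he ▸ Nat.odd_iff.2 hM
    obtain ⟨j, rfl⟩ := (Nat.odd_mul.1 this).2
    exact ⟨j, he.symm⟩
  unfold kap
  refine Finset.sum_bij_ne_zero (fun p _ _ => p.1 + 1) ?_ ?_ ?_ ?_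
  · intro p hp hne
    rw [Finset.mem_filter] at hp
    rw [Nat.mem_divisors, hdvd]
    refine ⟨⟨⟨_, hp.2.symm⟩, fun h => hne ?_⟩, hn₁⟩
    simp [ind3, h]
  · intro p hp _ p' hp' _ h
    rw [Finset.mem_filter] at hp hp'
    have h1 : p.1 = p'.1 := by omega
    have h2 : (p.1 + 1) * (2 * p.2 + 1) = (p.1 + 1) * (2 * p'.2 + 1) := by
      rw [hp.2, h1, hp'.2]
    have h3 := Nat.eq_of_mul_eq_mul_left (by omega) h2
    exact Prod.ext h1 (by omega)
  · intro d hd _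
    obtain ⟨hdM, hd3⟩ := (hdvd d).1 (Nat.dvd_of_mem_divisors hd)
    obtain ⟨j, hj⟩ := hodd d hdM
    obtain ⟨i, rfl⟩ : ∃ i, d = i + 1 := ⟨d - 1, by have := Nat.pos_of_mem_divisors hd; omega⟩
    refine ⟨(i, j), ?_, ?_, rfl⟩
    · simp only [Finset.mem_filter, Finset.mem_product, Finset.mem_range]
      exact ⟨⟨by nlinarith [Nat.zero_le (i * j)], by nlinarith [Nat.zero_le (i * j)]⟩, hj⟩
    · simp only [ind3, hd3, if_false]
      push_cast; omega
  · intro p hp hne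
    have : ¬ 3 ∣ p.1 + 1 := fun h => hne (by simp [ind3, h])
    simp [ind3, this]

/-! ### The triple product identity -/

/-- The finite product `(1 - Q)(1 - Q²)⋯(1 - Qⁿ)`. -/
def qp (Q : ℂ) (n : ℕ) : ℂ := ∏ k ∈ Finset.range n, (1 - Q ^ (k + 1))

/-- The infinite product `∏_{k ≥ 1} (1 - Q^k)`. -/
noncomputable def qpInf (Q : ℂ) : ℂ := ∏' k : ℕ, (1 - Q ^ (k + 1))

lemma one_sub_pow_ne_zero {Q : ℂ} (hQ : ‖Q‖ < 1) (k : ℕ) : 1 - Q ^ (k + 1) ≠ 0 := by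
  intro h
  have h1 : ‖Q ^ (k + 1)‖ = 1 := by rw [← sub_eq_zero.1 h, norm_one]
  exact absurd h1 (norm_pow_lt hQ k.succ_pos).ne

lemma summable_neg_pow {Q : ℂ} (hQ : ‖Q‖ < 1) : Summable fun k : ℕ => ‖-Q ^ (k + 1)‖ := by
  simp only [norm_neg, norm_pow]
  exact (summable_nat_add_iff 1).2 (summable_geometric_of_lt_one (norm_nonneg Q) hQ)

lemma multipliable_qp {Q : ℂ} (hQ : ‖Q‖ < 1) : Multipliable fun k : ℕ => 1 - Q ^ (k + 1) := by
  simpa only [sub_eq_add_neg] using multipliable_one_add_of_summable (summable_neg_pow hQ)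

lemma qp_tendsto {Q : ℂ} (hQ : ‖Q‖ < 1) :
    Filter.Tendsto (qp Q) Filter.atTop (nhds (qpInf Q)) :=
  (multipliable_qp hQ).hasProd.tendsto_prod_nat

lemma qp_ne_zero {Q : ℂ} (hQ : ‖Q‖ < 1) (n : ℕ) : qp Q n ≠ 0 :=
  Finset.prod_ne_zero_iff.2 fun k _ => one_sub_pow_ne_zero hQ k

lemma qpInf_ne_zero {Q : ℂ} (hQ : ‖Q‖ < 1) : qpInf Q ≠ 0 := by
  have := tprod_one_add_ne_zero_of_summable (f := fun k : ℕ => -Q ^ (k + 1))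
    (fun k => by rw [← sub_eq_add_neg]; exact one_sub_pow_ne_zero hQ k) (summable_neg_pow hQ)
  unfold qpInf
  simpa only [← sub_eq_add_neg] using this

/-- The Gaussian binomial coefficient. -/
noncomputable def gb (Q : ℂ) (M j : ℕ) : ℂ := qp Q M / (qp Q j * qp Q (M - j))

lemma gb_zero {Q : ℂ} (hQ : ‖Q‖ < 1) (M : ℕ) : gb Q M 0 = 1 := by
  have := qp_ne_zero hQ M
  simp only [gb, Nat.sub_zero]
  rw [show qp Q 0 = 1 from Finset.prod_range_zero _, one_mul, div_self this]

lemma gb_self {Q : ℂ} (hQ : ‖Q‖ < 1) (M : ℕ) : gb Q M M = 1 := by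
  have := qp_ne_zero hQ M
  simp only [gb, Nat.sub_self]
  rw [show qp Q 0 = 1 from Finset.prod_range_zero _, mul_one, div_self this]

lemma gb_pascal {Q : ℂ} (hQ : ‖Q‖ < 1) {M j : ℕ} (hj : j < M) :
    gb Q (M + 1) (j + 1) = gb Q M (j + 1) + Q ^ (M - j) * gb Q M j := by
  obtain ⟨i, rfl⟩ : ∃ i, M = j + (i + 1) := ⟨M - j - 1, by omega⟩
  have e1 : j + (i + 1) + 1 - (j + 1) = i + 1 := by omega
  have e2 : j + (i + 1) - (j + 1) = i := by omega
  have e3 : j + (i + 1) - j = i + 1 := by omega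
  have h1 := qp_ne_zero hQ j
  have h2 := qp_ne_zero hQ i
  have h3 := one_sub_pow_ne_zero hQ j
  have h4 := one_sub_pow_ne_zero hQ i
  have s : ∀ n, qp Q (n + 1) = qp Q n * (1 - Q ^ (n + 1)) := fun n => Finset.prod_range_succ _ _
  rw [gb, gb, gb, e1, e2, e3, s (j + (i + 1)), s j, s i]
  have e4 : Q ^ (j + (i + 1) + 1) = Q ^ (j + 1) * Q ^ (i + 1) := by rw [← pow_add]; congr 1; ring
  rw [e4]
  generalize Q ^ (j + 1) = X at *
  generalize Q ^ (i + 1) = Y at *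
  field_simp
  ring

/-- The `q`-binomial theorem. -/
lemma rothe {Q : ℂ} (hQ : ‖Q‖ < 1) (y : ℂ) (M : ℕ) :
    ∏ k ∈ Finset.range M, (1 + y * Q ^ k)
      = ∑ j ∈ Finset.range (M + 1), gb Q M j * Q ^ (j.choose 2) * y ^ j := by
  induction M with
  | zero => simp [gb_zero hQ]
  | succ M ih =>
    have h : ∀ j ∈ Finset.range M, gb Q (M + 1) (j + 1) * Q ^ ((j + 1).choose 2) * y ^ (j + 1)
        = gb Q M (j + 1) * Q ^ ((j + 1).choose 2) * y ^ (j + 1)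
          + gb Q M j * Q ^ (j.choose 2) * y ^ j * (y * Q ^ M) := by
      intro j hj
      have hj' := Finset.mem_range.1 hj
      rw [gb_pascal hQ hj']
      have e : Q ^ M = Q ^ (M - j) * Q ^ j := by rw [← pow_add]; congr 1; omega
      rw [e, Nat.choose_succ_succ' j 1, Nat.choose_one_right, pow_add]
      ring
    have e1 := Finset.sum_range_succ'
      (fun j => gb Q (M + 1) j * Q ^ (j.choose 2) * y ^ j) (M + 1)
    have e2 := Finset.sum_range_succ
      (fun j => gb Q (M + 1) (j + 1) * Q ^ ((j + 1).choose 2) * y ^ (j + 1)) M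
    have e3 := Finset.sum_range_succ' (fun j => gb Q M j * Q ^ (j.choose 2) * y ^ j) M
    have e4 := Finset.sum_range_succ (fun j => gb Q M j * Q ^ (j.choose 2) * y ^ j) M
    rw [Finset.sum_congr rfl h, Finset.sum_add_distrib, ← Finset.sum_mul] at e2
    simp only [gb_self hQ, gb_zero hQ] at e1 e2 e3 e4
    rw [Finset.prod_range_succ, ih, mul_add, mul_one, e1, e2]
    nth_rewrite 1 [e3]
    rw [e4, Nat.choose_succ_succ' M 1, Nat.choose_one_right]
    ring

lemma prod_odd_pow (q z : ℂ) (N : ℕ) :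
    ∏ k ∈ Finset.range N, z * (q ^ (2 * k + 1))⁻¹ = z ^ N * (q ^ N ^ 2)⁻¹ := by
  induction N with
  | zero => simp
  | succ N ih =>
    rw [Finset.prod_range_succ, ih, show (N + 1) ^ 2 = N ^ 2 + (2 * N + 1) by ring, pow_add q,
      mul_inv]
    ring

/-- The finite form of the Jacobi triple product, i.e. the `q`-binomial theorem with base `q²` and
`2N` factors, recentred at the middle term. -/
lemma finite_jtp {q z : ℂ} (hq : ‖q‖ < 1) (hq0 : q ≠ 0) (hz : z ≠ 0) (N : ℕ) :
    ∏ k ∈ Finset.range N, ((1 + z * q ^ (2 * k + 1)) * (1 + z⁻¹ * q ^ (2 * k + 1)))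
      = ∑ j ∈ Finset.range (2 * N + 1),
          gb (q ^ 2) (2 * N) j * (z ^ ((j : ℤ) - N) * q ^ sqn ((j : ℤ) - N)) := by
  have hr := rothe (norm_pow_lt hq two_pos) (z * q * (q ^ (2 * N))⁻¹) (2 * N)
  have h1 : ∏ k ∈ Finset.range (2 * N), (1 + z * q * (q ^ (2 * N))⁻¹ * (q ^ 2) ^ k)
      = z ^ N * (q ^ N ^ 2)⁻¹ * ∏ k ∈ Finset.range N,
        ((1 + z * q ^ (2 * k + 1)) * (1 + z⁻¹ * q ^ (2 * k + 1))) := by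
    rw [← prod_odd_pow, ← Finset.prod_mul_distrib, two_mul N, Finset.prod_range_add,
      ← Finset.prod_range_reflect, ← Finset.prod_mul_distrib]
    refine Finset.prod_congr rfl fun k hk => ?_
    have hk := Finset.mem_range.1 hk
    obtain ⟨i, rfl⟩ : ∃ i, N = i + k + 1 := ⟨N - k - 1, by omega⟩
    have e : i + k + 1 - 1 - k = i := by omega
    rw [e]
    have e1 : z * q * (q ^ (i + k + 1 + (i + k + 1)))⁻¹ * (q ^ 2) ^ i
        = z * (q ^ (2 * k + 1))⁻¹ := by
      have : q ^ (i + k + 1 + (i + k + 1)) = q * ((q ^ 2) ^ i * q ^ (2 * k + 1)) := by ring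
      rw [this]; field_simp
    have e2 : z * q * (q ^ (i + k + 1 + (i + k + 1)))⁻¹ * (q ^ 2) ^ (i + k + 1 + k)
        = z * q ^ (2 * k + 1) := by
      have : (q ^ 2) ^ (i + k + 1 + k) = q ^ (i + k + 1 + (i + k + 1)) * q ^ (2 * k) := by ring
      rw [this, pow_succ]; field_simp
    rw [e1, e2]
    field_simp
    ring
  rw [h1] at hr
  have hc : z ^ N * (q ^ N ^ 2)⁻¹ ≠ 0 :=
    mul_ne_zero (pow_ne_zero _ hz) (inv_ne_zero (pow_ne_zero _ hq0))
  refine mul_left_cancel₀ hc (hr.trans ?_)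
  rw [Finset.mul_sum]
  refine Finset.sum_congr rfl fun j _ => ?_
  have hcast : q ^ sqn ((j : ℤ) - N) = q ^ (((j : ℤ) - N) ^ 2) := by
    rw [← cast_sqn, zpow_natCast]
  have hch : (2 * (j.choose 2) : ℤ) = j * (j - 1) := by
    rcases j with _ | j
    · simp
    · have := Nat.add_one_mul_choose_eq j 1
      rw [Nat.choose_one_right] at this
      zify at this
      push_cast
      linarith
  have hz' : z ^ N * z ^ ((j : ℤ) - N) = z ^ j := by
    rw [← zpow_natCast, ← zpow_natCast, ← zpow_add₀ hz]; congr 1; ring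
  have hq' : (q ^ 2) ^ (j.choose 2) * (q * (q ^ (2 * N))⁻¹) ^ j
      = (q ^ N ^ 2)⁻¹ * q ^ (((j : ℤ) - N) ^ 2) := by
    rw [mul_pow, inv_pow, ← pow_mul, ← pow_mul, ← zpow_natCast, ← zpow_natCast, ← zpow_natCast,
      ← zpow_natCast, ← zpow_neg, ← zpow_neg, ← zpow_add₀ hq0, ← zpow_add₀ hq0, ← zpow_add₀ hq0]
    congr 1
    push_cast
    linear_combination hch
  rw [hcast, mul_assoc z, mul_pow z]
  linear_combination gb (q ^ 2) (2 * N) j * z ^ j * hq'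
    - gb (q ^ 2) (2 * N) j * (q ^ N ^ 2)⁻¹ * q ^ (((j : ℤ) - N) ^ 2) * hz'

/-- The coefficient of `zⁿ q^{n²}` in the finite triple product, extended by zero. -/
noncomputable def jtpCoeff (Q : ℂ) (N : ℕ) (n : ℤ) : ℂ :=
  if 0 ≤ N + n ∧ n ≤ N then gb Q (2 * N) (N + n).toNat else 0

lemma finite_jtp_tsum {q z : ℂ} (hq : ‖q‖ < 1) (hq0 : q ≠ 0) (hz : z ≠ 0) (N : ℕ) :
    ∏ k ∈ Finset.range N, ((1 + z * q ^ (2 * k + 1)) * (1 + z⁻¹ * q ^ (2 * k + 1)))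
      = ∑' n : ℤ, jtpCoeff (q ^ 2) N n * (z ^ n * q ^ sqn n) := by
  rw [finite_jtp hq hq0 hz, tsum_eq_sum
    (s := (Finset.range (2 * N + 1)).image fun j : ℕ => (j : ℤ) - N)]
  · rw [Finset.sum_image fun a _ b _ h => by simpa using h]
    refine Finset.sum_congr rfl fun j hj => ?_
    have hj := Finset.mem_range.1 hj
    rw [jtpCoeff, if_pos (by omega)]
    congr 2
    omega
  · intro n hn
    rw [jtpCoeff, if_neg, zero_mul]
    intro h
    exact hn (Finset.mem_image.2 ⟨(N + n).toNat, Finset.mem_range.2 (by omega), by omega⟩)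

lemma jtpCoeff_bounded {Q : ℂ} (hQ : ‖Q‖ < 1) : ∃ C, ∀ N n, ‖jtpCoeff Q N n‖ ≤ C := by
  obtain ⟨C, hC⟩ := (qp_tendsto hQ).norm.bddAbove_range
  obtain ⟨D, hD⟩ := ((qp_tendsto hQ).inv₀ (qpInf_ne_zero hQ)).norm.bddAbove_range
  have hC' : ∀ n, ‖qp Q n‖ ≤ C := fun n => hC ⟨n, rfl⟩
  have hD' : ∀ n, ‖(qp Q n)⁻¹‖ ≤ D := fun n => hD ⟨n, rfl⟩
  have C0 := (norm_nonneg _).trans (hC' 0)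
  have D0 := (norm_nonneg _).trans (hD' 0)
  refine ⟨C * (D * D), fun N n => ?_⟩
  unfold jtpCoeff
  split_ifs
  · rw [gb, div_eq_mul_inv, mul_inv, norm_mul, norm_mul]
    exact mul_le_mul (hC' _) (mul_le_mul (hD' _) (hD' _) (norm_nonneg _) D0) (by positivity) C0
  · rw [norm_zero]; positivity

lemma jtpCoeff_tendsto {Q : ℂ} (hQ : ‖Q‖ < 1) (n : ℤ) :
    Filter.Tendsto (fun N => jtpCoeff Q N n) Filter.atTop (nhds (qpInf Q)⁻¹) := by
  have h0 := qpInf_ne_zero hQ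
  have t1 : Filter.Tendsto (fun N : ℕ => 2 * N) Filter.atTop Filter.atTop :=
    Filter.tendsto_atTop_mono (fun N => by dsimp only [id]; omega) Filter.tendsto_id
  have t2 : Filter.Tendsto (fun N : ℕ => (N + n).toNat) Filter.atTop Filter.atTop :=
    Filter.tendsto_atTop_mono (fun N => by omega) (Filter.tendsto_sub_atTop_nat n.natAbs)
  have t3 : Filter.Tendsto (fun N : ℕ => 2 * N - (N + n).toNat) Filter.atTop Filter.atTop :=
    Filter.tendsto_atTop_mono (fun N => by omega) (Filter.tendsto_sub_atTop_nat n.natAbs)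
  have h := ((qp_tendsto hQ).comp t1).div (((qp_tendsto hQ).comp t2).mul ((qp_tendsto hQ).comp t3))
    (mul_ne_zero h0 h0)
  rw [div_mul_cancel_left₀ h0] at h
  refine h.congr' ?_
  filter_upwards [Filter.eventually_ge_atTop n.natAbs] with N hN
  rw [jtpCoeff, if_pos (by omega)]
  rfl

/-- The Jacobi triple product identity, as a limit of partial products. -/
lemma jtp {q z : ℂ} (hq : ‖q‖ < 1) (hq0 : q ≠ 0) (hz : z ≠ 0)
    (hs : Summable fun n : ℤ => ‖z ^ n * q ^ sqn n‖) :
    Filter.Tendsto (fun N => ∏ k ∈ Finset.range N,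
        ((1 + z * q ^ (2 * k + 1)) * (1 + z⁻¹ * q ^ (2 * k + 1)))) Filter.atTop
      (nhds ((qpInf (q ^ 2))⁻¹ * ∑' n : ℤ, z ^ n * q ^ sqn n)) := by
  have hQ := norm_pow_lt hq two_pos
  obtain ⟨C, hC⟩ := jtpCoeff_bounded hQ
  simp only [finite_jtp_tsum hq hq0 hz]
  rw [← tsum_mul_left]
  refine tendsto_tsum_of_dominated_convergence (hs.mul_left C)
    (fun n => (jtpCoeff_tendsto hQ n).mul_const _) (Filter.Eventually.of_forall fun N n => ?_)
  rw [norm_mul]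
  exact mul_le_mul_of_nonneg_right (hC N n) (norm_nonneg _)

/-- The triple product for base `x²` and `z = -1`. -/
lemma phi_neg_product {x : ℂ} (hx : ‖x‖ < 1) (hx0 : x ≠ 0) :
    Filter.Tendsto (fun N => ∏ k ∈ Finset.range N, (1 - x ^ (4 * k + 2)) ^ 2) Filter.atTop
      (nhds ((qpInf (x ^ 4))⁻¹ * phi (-x ^ 2))) := by
  have hx2 := norm_pow_lt hx two_pos
  have e : ∀ n : ℤ, (-1 : ℂ) ^ n * (x ^ 2) ^ sqn n = (-x ^ 2) ^ sqn n := by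
    intro n
    rw [neg_pow (x ^ 2)]
    congr 1
    rcases Int.even_or_odd n with h | h
    · rw [h.neg_one_zpow, ((even_sqn n).2 h).neg_one_pow]
    · rw [h.neg_one_zpow, Odd.neg_one_pow]
      rw [← Nat.not_even_iff_odd, even_sqn, Int.not_even_iff_odd]
      exact h
  have h := jtp (q := x ^ 2) (z := -1) hx2 (pow_ne_zero _ hx0) (by norm_num) (by
    simp only [e]; exact phi_summable (by rwa [norm_neg]))
  simp only [e] at h
  simp only [← pow_mul] at h
  refine h.congr fun N => Finset.prod_congr rfl fun k _ => ?_
  rw [show 2 * (2 * k + 1) = 4 * k + 2 by ring]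
  norm_num
  ring

/-- The triple product for base `x²` and `z = -x⁻¹`. The terms of `Ψ(-x)` with even index give half
of it, by the symmetry `n ↦ 1 - n`. -/
lemma psi_neg_product {x : ℂ} (hx : ‖x‖ < 1) (hx0 : x ≠ 0) :
    Filter.Tendsto (fun N => ∏ k ∈ Finset.range N, ((1 - x ^ (4 * k + 1)) * (1 - x ^ (4 * k + 3))))
      Filter.atTop (nhds ((qpInf (x ^ 4))⁻¹ * (psi (-x) / 2))) := by
  have hx2 := norm_pow_lt hx two_pos
  have hx' : ‖-x‖ < 1 := by rwa [norm_neg]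
  have hsum := psi_summable hx'
  have e : ∀ n : ℤ, (-x⁻¹) ^ n * (x ^ 2) ^ sqn n = (-x) ^ tri (2 * n) := by
    intro n
    have h1 := cast_sqn n
    have h2 := two_mul_tri (2 * n)
    have hx0' : -x ≠ 0 := neg_ne_zero.2 hx0
    rw [← neg_sq x, ← pow_mul, ← inv_neg, inv_zpow, ← zpow_neg, ← zpow_natCast,
      ← zpow_natCast, ← zpow_add₀ hx0']
    congr 1
    push_cast
    linarith
  have htwo : psi (-x) = 2 * ∑' n : ℤ, (-x) ^ tri (2 * n) := by
    rw [psi, tsum_split even_odd_bijective hsum.of_norm, two_mul]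
    congr 1
    rw [← (Equiv.neg ℤ).tsum_eq]
    refine tsum_congr fun n => pow_congr _ ?_
    rw [two_mul_tri, two_mul_tri, Equiv.neg_apply]
    ring
  have hinj : Function.Injective fun n : ℤ => 2 * n := fun a b h => by
    simpa using h
  have h := jtp (q := x ^ 2) (z := -x⁻¹) hx2 (pow_ne_zero _ hx0) (neg_ne_zero.2 (inv_ne_zero hx0)) (by
    simp only [e]; exact hsum.comp_injective hinj)
  simp only [e] at h
  simp only [← pow_mul] at h
  rw [show psi (-x) / 2 = ∑' n : ℤ, (-x) ^ tri (2 * n) by rw [htwo]; ring]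
  refine h.congr fun N => Finset.prod_congr rfl fun k _ => ?_
  have e1 : x ^ (2 * (2 * k + 1)) = x * x ^ (4 * k + 1) := by ring
  have e2 : x ^ (4 * k + 3) = x * (x * x ^ (4 * k + 1)) := by ring
  rw [e1, e2, ← sub_eq_zero]
  field_simp
  ring

lemma qp_split (x : ℂ) (N : ℕ) :
    qp (x ^ 4) N * qp (x ^ 4) N * ((∏ k ∈ Finset.range N, (1 - x ^ (4 * k + 2)) ^ 2)
      * ∏ k ∈ Finset.range N, ((1 - x ^ (4 * k + 1)) * (1 - x ^ (4 * k + 3))))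
    = qp x (4 * N) * qp (x ^ 2) (2 * N) := by
  induction N with
  | zero => simp [qp]
  | succ N ih =>
    rw [show 4 * (N + 1) = 4 * N + 1 + 1 + 1 + 1 by ring, show 2 * (N + 1) = 2 * N + 1 + 1 by ring]
    unfold qp at ih ⊢
    simp only [Finset.prod_range_succ]
    rw [show x ^ (4 * N + 1 + 1 + 1 + 1) = (x ^ 4) ^ (N + 1) by ring,
      show (x ^ 2) ^ (2 * N + 1 + 1) = (x ^ 4) ^ (N + 1) by ring,
      show (x ^ 2) ^ (2 * N + 1) = x ^ (4 * N + 2) by ring,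
      show 4 * N + 1 + 1 = 4 * N + 2 by ring, show 4 * N + 2 + 1 = 4 * N + 3 by ring]
    linear_combination (1 - (x ^ 4) ^ (N + 1)) ^ 2 * (1 - x ^ (4 * N + 2)) ^ 2
      * (1 - x ^ (4 * N + 1)) * (1 - x ^ (4 * N + 3)) * ih

/-- The product of two triple products: `φ(-x²) Ψ(-x) = 2 ∏ (1 - x^k)(1 - x^{2k})`. -/
lemma phi_mul_psi_product {x : ℂ} (hx : ‖x‖ < 1) (hx0 : x ≠ 0) :
    phi (-x ^ 2) * psi (-x) = 2 * (qpInf x * qpInf (x ^ 2)) := by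
  have h4 := norm_pow_lt hx (k := 4) (by norm_num)
  have h2 := norm_pow_lt hx two_pos
  have t4 : Filter.Tendsto (fun N : ℕ => 4 * N) Filter.atTop Filter.atTop :=
    Filter.tendsto_atTop_mono (fun N => by dsimp only [id]; omega) Filter.tendsto_id
  have t2 : Filter.Tendsto (fun N : ℕ => 2 * N) Filter.atTop Filter.atTop :=
    Filter.tendsto_atTop_mono (fun N => by dsimp only [id]; omega) Filter.tendsto_id
  have hR := ((qp_tendsto hx).comp t4).mul ((qp_tendsto h2).comp t2)
  have hL := ((qp_tendsto h4).mul (qp_tendsto h4)).mul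
    ((phi_neg_product hx hx0).mul (psi_neg_product hx hx0))
  have := tendsto_nhds_unique hL (hR.congr fun N => (qp_split x N).symm)
  rw [← this]
  have h0 := qpInf_ne_zero h4
  field_simp

/-- The eta quotient of the statement as a product of theta functions. -/
lemma eta_product {q : ℂ} (hq : ‖q‖ < 1) :
    4 * (q * ∏' k : ℕ, ((1 - q ^ (2 * (k + 1))) * (1 - q ^ (4 * (k + 1))) *
          (1 - q ^ (6 * (k + 1))) * (1 - q ^ (12 * (k + 1)))))
      = q * phi (-q ^ 4) * phi (-q ^ 12) * psi (-q ^ 2) * psi (-q ^ 6) := by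
  rcases eq_or_ne q 0 with rfl | h0
  · simp
  have hm : ∀ m : ℕ, 0 < m → Multipliable fun k : ℕ => 1 - q ^ (m * (k + 1)) := fun m h => by
    simpa only [pow_mul] using multipliable_qp (norm_pow_lt hq h)
  have ht : ∀ m : ℕ, ∏' k : ℕ, (1 - q ^ (m * (k + 1))) = qpInf (q ^ m) := fun m => by
    simp only [pow_mul, qpInf]
  have m2 := hm 2 (by norm_num)
  have m4 := hm 4 (by norm_num)
  have m6 := hm 6 (by norm_num)
  have m12 := hm 12 (by norm_num)
  have p2 := phi_mul_psi_product (norm_pow_lt hq (k := 2) (by norm_num)) (pow_ne_zero 2 h0)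
  have p6 := phi_mul_psi_product (norm_pow_lt hq (k := 6) (by norm_num)) (pow_ne_zero 6 h0)
  rw [((m2.mul m4).mul m6).tprod_mul m12, (m2.mul m4).tprod_mul m6, m2.tprod_mul m4, ht, ht, ht, ht]
  simp only [← pow_mul] at p2 p6
  norm_num at p2 p6
  linear_combination -q * psi (-q ^ 6) * phi (-q ^ 12) * p2 - 2 * q * qpInf (q ^ 2) * qpInf (q ^ 4) * p6

/-- The eta quotient does not vanish on the punctured disc. -/
lemma eta_product_ne_zero {q : ℂ} (hq : ‖q‖ < 1) (h0 : q ≠ 0) :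
    q * ∏' k : ℕ, ((1 - q ^ (2 * (k + 1))) * (1 - q ^ (4 * (k + 1))) *
          (1 - q ^ (6 * (k + 1))) * (1 - q ^ (12 * (k + 1)))) ≠ 0 := by
  intro h
  have e := eta_product hq
  have n2 := norm_pow_lt hq (k := 2) (by norm_num)
  have n6 := norm_pow_lt hq (k := 6) (by norm_num)
  have p2 := phi_mul_psi_product n2 (pow_ne_zero 2 h0)
  have p6 := phi_mul_psi_product n6 (pow_ne_zero 6 h0)
  have z2 := mul_ne_zero two_ne_zero
    (mul_ne_zero (qpInf_ne_zero n2) (qpInf_ne_zero (norm_pow_lt n2 two_pos)))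
  have z6 := mul_ne_zero two_ne_zero
    (mul_ne_zero (qpInf_ne_zero n6) (qpInf_ne_zero (norm_pow_lt n6 two_pos)))
  rw [← p2] at z2
  rw [← p6] at z6
  simp only [← pow_mul] at z2 z6
  norm_num at z2 z6
  rw [h, mul_zero] at e
  have := e.symm
  simp [h0, z2, z6] at this

/-! ### Dissection modulo 8 -/

/-- The parts of `K + 16 A` with exponents congruent to `2` modulo `4`, `1` modulo `4`, `3` modulo
`8` and `7` modulo `8`, where `K(q) = q Ψ(q)² Ψ(q³)²` and
`4 A(q) = q φ(-q⁴) φ(-q¹²) Ψ(-q²) Ψ(-q⁶)`. The part of interest is the third one. The identity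
follows from the dissections of `φ(q)`, `φ(q)²`, `Ψ(q)²`, `Ψ(q)Ψ(q³)` at suitable powers of `±q`. -/
lemma dissection {q : ℂ} (hq : ‖q‖ < 1) :
    q * (psi q * psi (q ^ 3)) ^ 2
        + 4 * (q * phi (-q ^ 4) * phi (-q ^ 12) * psi (-q ^ 2) * psi (-q ^ 6)) =
      q ^ 2 * (8 * (phi (q ^ 6) * psi (q ^ 4) * (phi (q ^ 2) * psi (q ^ 12))))
      + q * (8 * (phi (q ^ 12) * (phi (q ^ 12) * (phi (q ^ 4) * psi (q ^ 8))))
        + 8 * (q ^ 4 * (psi (q ^ 8) * (psi (q ^ 8) * (phi (q ^ 12) * psi (q ^ 24)))))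
        + 8 * (phi (-q ^ 4) * (phi (-q ^ 12) * (phi (q ^ 12) * psi (q ^ 8)))))
      + q ^ 11 * (16 * (psi (q ^ 8) * psi (q ^ 24) ^ 2 * psi (q ^ 32)))
      + q ^ 7 * (8 * (psi (q ^ 24) * (psi (q ^ 24) * (psi (q ^ 8) * phi (q ^ 16))))
        + 8 * (psi (q ^ 16) * (psi (q ^ 16) * (psi (q ^ 24) * phi (q ^ 48))))
        + 8 * (q ^ 8 * (phi (q ^ 8) * (phi (q ^ 8) * (psi (q ^ 24) * psi (q ^ 96)))))
        + 8 * (q ^ 8 * (phi (-q ^ 8) * (phi (-q ^ 8) * (psi (q ^ 24) * psi (q ^ 96)))))) := by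
  have hk : ∀ k : ℕ, 0 < k → ‖q ^ k‖ < 1 := fun k hk => norm_pow_lt hq hk
  have hk' : ∀ k : ℕ, 0 < k → ‖-q ^ k‖ < 1 := fun k h => by rw [norm_neg]; exact hk k h
  have e1 := psi_mul_psi_three hq
  have e2 := psi_mul_psi_three (hk' 2 (by norm_num))
  have s4 := psi_sq (hk 4 (by norm_num))
  have s12 := psi_sq (hk 12 (by norm_num))
  have s16 := psi_sq (hk 16 (by norm_num))
  have d2 := phi_sq (hk 2 (by norm_num))
  have d6 := phi_sq (hk 6 (by norm_num))
  have d4 := phi_sq (hk 4 (by norm_num))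
  have d8 := phi_sq (hk 8 (by norm_num))
  have d8' := phi_sq (hk' 8 (by norm_num))
  have m4 := phi_mul_phi_neg (hk 4 (by norm_num))
  have c4 := phi_dissect (hk 4 (by norm_num))
  have c12 := phi_dissect (hk 12 (by norm_num))
  have c12' := phi_dissect (hk' 12 (by norm_num))
  have e8 := psi_mul_psi_three (hk 8 (by norm_num))
  have n1 : (-q ^ 2) ^ 3 = -q ^ 6 := by ring
  have n2 : (-q ^ 2) ^ 6 = q ^ 12 := by ring
  have n3 : (-q ^ 2) ^ 4 = q ^ 8 := by ring
  have n4 : (-q ^ 2) ^ 2 = q ^ 4 := by ring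
  have n5 : (-q ^ 2) ^ 12 = q ^ 24 := by ring
  have n6 : (-q ^ 8) ^ 2 = q ^ 16 := by ring
  have n7 : (-q ^ 8) ^ 4 = q ^ 32 := by ring
  have n8 : (-q ^ 12) ^ 4 = q ^ 48 := by ring
  have n9 : (-q ^ 12) ^ 8 = q ^ 96 := by ring
  rw [n1, n2, n3, n4, n5] at e2
  rw [n6, n7] at d8'
  rw [n8, n9] at c12'
  simp only [← pow_mul, Nat.reduceMul] at s4 s12 s16 d2 d6 d4 d8 m4 c4 c12 e8
  have K : q * (psi q * psi (q ^ 3)) ^ 2 =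
      8 * q * phi (q ^ 12) ^ 2 * phi (q ^ 4) * psi (q ^ 8)
      + 8 * q ^ 7 * psi (q ^ 24) ^ 2 * phi (q ^ 4) * psi (q ^ 8)
      + 8 * q ^ 2 * (phi (q ^ 6) * psi (q ^ 4) * (phi (q ^ 2) * psi (q ^ 12)))
      + 8 * q ^ 3 * phi (q ^ 4) ^ 2 * phi (q ^ 12) * psi (q ^ 24)
      + 8 * q ^ 5 * psi (q ^ 8) ^ 2 * phi (q ^ 12) * psi (q ^ 24) := by
    rw [e1]
    linear_combination 4 * q * (phi (q ^ 6) ^ 2 * s4 + 2 * phi (q ^ 4) * psi (q ^ 8) * d6)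
      + 4 * q ^ 3 * (phi (q ^ 2) ^ 2 * s12 + 2 * phi (q ^ 12) * psi (q ^ 24) * d2)
  have A : q * phi (-q ^ 4) * phi (-q ^ 12) * psi (-q ^ 2) * psi (-q ^ 6) =
      2 * q * phi (-q ^ 4) * phi (-q ^ 12) * phi (q ^ 12) * psi (q ^ 8)
      - 2 * q ^ 3 * phi (-q ^ 8) ^ 2 * phi (-q ^ 12) * psi (q ^ 24) := by
    linear_combination q * phi (-q ^ 4) * phi (-q ^ 12) * e2
      - 2 * q ^ 3 * phi (-q ^ 12) * psi (q ^ 24) * m4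
  -- the exponents congruent to 3 modulo 4
  have B : phi (q ^ 4) ^ 2 * phi (q ^ 12) * psi (q ^ 24)
      + q ^ 4 * psi (q ^ 24) ^ 2 * phi (q ^ 4) * psi (q ^ 8)
      - phi (-q ^ 8) ^ 2 * phi (-q ^ 12) * psi (q ^ 24) =
      2 * q ^ 8 * (psi (q ^ 8) * psi (q ^ 24) ^ 2 * psi (q ^ 32))
      + q ^ 4 * (psi (q ^ 24) ^ 2 * psi (q ^ 8) * phi (q ^ 16)
        + psi (q ^ 16) ^ 2 * psi (q ^ 24) * phi (q ^ 48)
        + q ^ 8 * phi (q ^ 8) ^ 2 * psi (q ^ 24) * psi (q ^ 96)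
        + q ^ 8 * phi (-q ^ 8) ^ 2 * psi (q ^ 24) * psi (q ^ 96)) := by
    rw [d4, c4, c12, c12']
    linear_combination phi (q ^ 48) * psi (q ^ 24) * (d8 - d8')
      + q ^ 16 * psi (q ^ 96) * psi (q ^ 24) * s16
      - q ^ 8 * psi (q ^ 32) * psi (q ^ 24) * e8
  linear_combination K + 4 * A + 8 * q ^ 3 * B

/-! ### Comparing coefficients -/

lemma hasGF_phi : HasGF phi :=
  (GF.of_exponents sqn fun _ hq => (phi_summable hq).of_norm).hasGF

lemma hasGF_psi : HasGF psi :=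
  (GF.of_exponents tri fun _ hq => (psi_summable hq).of_norm).hasGF

/-- The generating function of `tquad 1 3 3 4`. -/
lemma GF_tquad : GF (fun q => psi q * psi (q ^ 3) ^ 2 * psi (q ^ 4))
    (fun n => (tquad 1 3 3 4 n : ℂ)) := by
  have key : ∀ q : ℂ, ‖q‖ < 1 → HasSum (fun p : ℤ × ℤ × ℤ × ℤ =>
      q ^ (tri p.1 + (3 * tri p.2.1 + (3 * tri p.2.2.1 + 4 * tri p.2.2.2))))
      (psi q * psi (q ^ 3) ^ 2 * psi (q ^ 4)) := by
    intro q hq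
    have h1 := psi_summable hq
    have h3 := psi_pow_summable hq (k := 3) (by norm_num)
    have h4 := psi_pow_summable hq (k := 4) (by norm_num)
    have s2 := summable_mul_of_summable_norm
      (f := fun n => q ^ (3 * tri n)) (g := fun n => q ^ (4 * tri n)) h3 h4
    have s3 := summable_mul_of_summable_norm (f := fun n => q ^ (3 * tri n))
      (g := fun p : ℤ × ℤ => q ^ (3 * tri p.1) * q ^ (4 * tri p.2)) h3 s2.norm
    have s4 := summable_mul_of_summable_norm (f := fun n => q ^ tri n)
      (g := fun p : ℤ × ℤ × ℤ => q ^ (3 * tri p.1) * (q ^ (3 * tri p.2.1) * q ^ (4 * tri p.2.2)))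
      h1 s3.norm
    have e : psi q * psi (q ^ 3) ^ 2 * psi (q ^ 4) = ∑' p : ℤ × ℤ × ℤ × ℤ,
        q ^ tri p.1 * (q ^ (3 * tri p.2.1) * (q ^ (3 * tri p.2.2.1) * q ^ (4 * tri p.2.2.2))) := by
      rw [← tsum_mul_tsum_of_summable_norm (f := fun n => q ^ tri n)
        (g := fun p : ℤ × ℤ × ℤ => q ^ (3 * tri p.1) * (q ^ (3 * tri p.2.1) * q ^ (4 * tri p.2.2)))
        h1 s3.norm,
        ← tsum_mul_tsum_of_summable_norm (f := fun n => q ^ (3 * tri n))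
        (g := fun p : ℤ × ℤ => q ^ (3 * tri p.1) * q ^ (4 * tri p.2)) h3 s2.norm,
        ← tsum_mul_tsum_of_summable_norm
        (f := fun n => q ^ (3 * tri n)) (g := fun n => q ^ (4 * tri n)) h3 h4,
        ← psi_pow, ← psi_pow, psi]
      ring
    rw [e]
    simpa only [pow_add] using s4.hasSum
  have h := GF.of_exponents (fun p : ℤ × ℤ × ℤ × ℤ =>
      tri p.1 + (3 * tri p.2.1 + (3 * tri p.2.2.1 + 4 * tri p.2.2.2)))
    fun q hq => (key q hq).summable
  have hc : (fun n => (tquad 1 3 3 4 n : ℂ)) = fun n => ((Nat.card {p : ℤ × ℤ × ℤ × ℤ //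
      tri p.1 + (3 * tri p.2.1 + (3 * tri p.2.2.1 + 4 * tri p.2.2.2)) = n} : ℕ) : ℂ) := by
    funext n
    congr 1
    refine Nat.card_congr (Equiv.subtypeEquivRight fun p => ?_)
    rw [← cast_tri, ← cast_tri, ← cast_tri, ← cast_tri]
    push_cast
    omega
  rw [hc]
  exact h.congr fun q hq => (key q hq).tsum_eq

/-- Since the eta quotient vanishes only at the origin, no junk value of `tsum` can occur in the
hypothesis, so the `a k` are its Taylor coefficients. -/
lemma GF_eta {a : ℕ → ℤ}
    (ha : ∀ q : ℂ, ‖q‖ < 1 →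
      ∑' k : ℕ, (a k : ℂ) * q ^ k =
        q * ∏' k : ℕ, ((1 - q ^ (2 * (k + 1))) * (1 - q ^ (4 * (k + 1))) *
          (1 - q ^ (6 * (k + 1))) * (1 - q ^ (12 * (k + 1))))) :
    GF (fun q => 4 * (q * phi (-q ^ 4) * phi (-q ^ 12) * psi (-q ^ 2) * psi (-q ^ 6)))
      (fun k => 16 * (a k : ℂ)) := by
  have h : GF (fun q => q * ∏' k : ℕ, ((1 - q ^ (2 * (k + 1))) * (1 - q ^ (4 * (k + 1))) *
          (1 - q ^ (6 * (k + 1))) * (1 - q ^ (12 * (k + 1))))) (fun k => (a k : ℂ)) := by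
    intro q hq
    dsimp only
    rw [← ha q hq]
    refine Summable.hasSum ?_
    rcases eq_or_ne q 0 with rfl | h0
    · exact summable_of_ne_finset_zero (s := {0}) fun k hk => by
        rw [zero_pow (by simpa using hk), mul_zero]
    · by_contra hns
      have := ha q hq
      rw [tsum_eq_zero_of_not_summable hns] at this
      exact eta_product_ne_zero hq h0 this.symm
  refine (h.const_mul 16).congr fun q hq => ?_
  rw [← eta_product hq]
  ring

/-- In the dissection, only the term `16 q¹¹ Ψ(q⁸)Ψ(q²⁴)²Ψ(q³²)` has exponents congruent to `3`
modulo `8`. -/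
lemma kap_add_eq {a : ℕ → ℤ}
    (ha : GF (fun q => 4 * (q * phi (-q ^ 4) * phi (-q ^ 12) * psi (-q ^ 2) * psi (-q ^ 6)))
      (fun k => 16 * (a k : ℂ))) (n : ℕ) :
    (tquad 1 3 3 4 n : ℤ) = kap (8 * n + 11) + a (8 * n + 11) := by
  have P : ∀ m, 0 < m → HasGF fun q => phi (q ^ m) := fun m hm => hasGF_phi.comp_pow hm
  have S : ∀ m, 0 < m → HasGF fun q => psi (q ^ m) := fun m hm => hasGF_psi.comp_pow hm
  have N : ∀ m, 0 < m → HasGF fun q => phi (-q ^ m) := fun m hm => hasGF_phi.comp_neg.comp_pow hm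
  have p1 := hasGF_phi
  have s1 := hasGF_psi
  have n1 := hasGF_phi.comp_neg
  have p3 := P 3 (by norm_num)
  obtain ⟨e, he⟩ : HasGF fun y => 8 * (phi (y ^ 3) * psi (y ^ 2) * (phi y * psi (y ^ 6))) :=
    ((p3.mul (S 2 (by norm_num))).mul (p1.mul (S 6 (by norm_num)))).const_mul 8
  obtain ⟨c, hc⟩ : HasGF fun y => 8 * (phi (y ^ 3) * (phi (y ^ 3) * (phi y * psi (y ^ 2))))
      + 8 * (y * (psi (y ^ 2) * (psi (y ^ 2) * (phi (y ^ 3) * psi (y ^ 6)))))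
      + 8 * (phi (-y) * (phi (-y ^ 3) * (phi (y ^ 3) * psi (y ^ 2)))) :=
    (((p3.mul (p3.mul (p1.mul (S 2 (by norm_num))))).const_mul 8).add
      (((S 2 (by norm_num)).mul ((S 2 (by norm_num)).mul
        (p3.mul (S 6 (by norm_num))))).id_mul.const_mul 8)).add
      ((n1.mul ((N 3 (by norm_num)).mul (p3.mul (S 2 (by norm_num))))).const_mul 8)
  obtain ⟨d, hd⟩ : HasGF fun y => 8 * (psi (y ^ 3) * (psi (y ^ 3) * (psi y * phi (y ^ 2))))
      + 8 * (psi (y ^ 2) * (psi (y ^ 2) * (psi (y ^ 3) * phi (y ^ 6))))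
      + 8 * (y * (phi y * (phi y * (psi (y ^ 3) * psi (y ^ 12)))))
      + 8 * (y * (phi (-y) * (phi (-y) * (psi (y ^ 3) * psi (y ^ 12))))) :=
    (((((S 3 (by norm_num)).mul ((S 3 (by norm_num)).mul
        (s1.mul (P 2 (by norm_num))))).const_mul 8).add
      (((S 2 (by norm_num)).mul ((S 2 (by norm_num)).mul
        ((S 3 (by norm_num)).mul (P 6 (by norm_num))))).const_mul 8)).add
      ((p1.mul (p1.mul ((S 3 (by norm_num)).mul (S 12 (by norm_num))))).id_mul.const_mul 8)).add
      ((n1.mul (n1.mul ((S 3 (by norm_num)).mul (S 12 (by norm_num))))).id_mul.const_mul 8)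
  have hL := GF.add GF_K ha
  have hR := (((GF.shift 2 (GF.comp_pow (m := 2) (by norm_num) he)).add
    (GF.shift 1 (GF.comp_pow (m := 4) (by norm_num) hc))).add
    (GF.shift 11 (GF.comp_pow (m := 8) (by norm_num) (GF.const_mul 16 GF_tquad)))).add
    (GF.shift 7 (GF.comp_pow (m := 8) (by norm_num) hd))
  have hR' := hR.congr (g := fun q => q * (psi q * psi (q ^ 3)) ^ 2
      + 4 * (q * phi (-q ^ 4) * phi (-q ^ 12) * psi (-q ^ 2) * psi (-q ^ 6))) fun q hq => by
    rw [dissection hq]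
    simp only [← pow_mul]
    norm_num
  have h := congrFun (GF.unique hL hR') (8 * n + 11)
  rw [if_pos (by omega), if_neg (by omega), if_pos (by omega), if_neg (by omega), if_pos (by omega),
    if_pos (by omega), if_pos (by omega), if_neg (by omega),
    show (8 * n + 11 - 11) / 8 = n by omega] at h
  have h' : ((tquad 1 3 3 4 n : ℤ) : ℂ) = ((kap (8 * n + 11) + a (8 * n + 11) : ℤ) : ℂ) := by
    push_cast
    linear_combination -h / 16
  exact_mod_cast h'

theorem stmt_19 (n : ℕ) (hn : 0 < n) (β n₁ : ℕ) (hn₁ : 0 < n₁) (h3 : ¬ 3 ∣ n₁)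
    (hfac : 8 * n + 11 = 3 ^ β * n₁) (a : ℕ → ℤ)
    (ha : ∀ q : ℂ, ‖q‖ < 1 →
      ∑' k : ℕ, (a k : ℂ) * q ^ k =
        q * ∏' k : ℕ, ((1 - q ^ (2 * (k + 1))) * (1 - q ^ (4 * (k + 1))) *
          (1 - q ^ (6 * (k + 1))) * (1 - q ^ (12 * (k + 1))))) :
    (tquad 1 3 3 4 n : ℤ) = ∑ d ∈ n₁.divisors, (d : ℤ) + a (8 * n + 11) := by
  rw [kap_add_eq (GF_eta ha), kap_eq (by omega) h3 hfac]
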